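/- Let δ > 0 and N > 0. There is a constant C = C(N, δ, ω, ω₀) such that for all real Q ≥ 1, all q ∈ ℕ, all a ∈ ℤ² with gcd(a₁,a₂,q) = 1 and all w ∈ ℝ² the following holds: if μ_{M(w)}(Λ(a,q)) ≥ Q^{δ}( q Q^{−1} + |w| q Q^{1/2} ), then | Σ_{r ∈ Λ(a,q), r ≠ 0} ω(|r|/Q^{1/2}) p_{2,r,k(r),q}(w) − (c Q^{1/2}/q) ∫_{ℝ²} |t|^{−1} ω(|t|/Q^{1/2}) ω̂₀( (Q^{3/2}/|t|) (w·t^⊥) ) dt | ≤ C Q^{−N}, where k(r) = gcd(r₁,r₂)/gcd(r₁,r₂,q) and ω̂₀(t) = ∫_ℝ ω₀(x) e(−xt) dx. -/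

import Mathlib

open MeasureTheory Real Matrix Finset

noncomputable section

/-- `e(x) = exp(2πix)`. -/
def e2pi (x : ℝ) : ℂ := Complex.exp (2 * Real.pi * Complex.I * x)

/-- Euclidean norm on `ℝ²`. -/
def nrm2 (x : ℝ × ℝ) : ℝ := Real.sqrt (x.1 ^ 2 + x.2 ^ 2)

/-- Dot product on `ℝ²`. -/
def dot2 (x y : ℝ × ℝ) : ℝ := x.1 * y.1 + x.2 * y.2

/-- `x^⊥ = (x₂, -x₁)`. -/
def perp2 (x : ℝ × ℝ) : ℝ × ℝ := (x.2, -x.1)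

/-- `δ_n` for `n ∈ ℤ²`. -/
def deltaInt (n : ℤ × ℤ) : ℂ := if n = 0 then 1 else 0

/-- `h(y,z) = Σ_{j ≥ 1} (1/(yj)) (ω(yj) − ω(|z|/(yj)))`. -/
def hFun (ω : ℝ → ℝ) (y z : ℝ) : ℝ :=
  ∑' j : ℕ+, (1 / (y * ((j : ℕ) : ℝ))) *
    (ω (y * ((j : ℕ) : ℝ)) - ω (|z| / (y * ((j : ℕ) : ℝ))))

/-- `c = (∫_{ℝ²} ω(|x|) dx)⁻¹`. -/
def cConst (ω : ℝ → ℝ) : ℝ := (∫ x : ℝ × ℝ, ω (nrm2 x))⁻¹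

/-- The function `p_{1,q}`. -/
def p1 (ω ω₀ : ℝ → ℝ) (Q : ℝ) (q : ℕ) (w : ℝ × ℝ) : ℂ :=
  -(cConst ω / Q : ℝ) * ∫ x : ℝ × ℝ,
    (((ω₀ (nrm2 x / Q ^ ((3 : ℝ) / 2)) *
      ∑' j : ℕ+, (1 / ((q : ℝ) * ((j : ℕ) : ℝ)) ^ 2) *
        ω (nrm2 x / (((j : ℕ) : ℝ) * (q : ℝ) * Q ^ ((1 : ℝ) / 2)))) : ℝ) : ℂ) *
      e2pi (-(dot2 w x))

/-- The function `p_{2,r,k,q}` (with `q` allowed to be a real parameter). -/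
def p2 (ω ω₀ : ℝ → ℝ) (Q : ℝ) (r : ℤ × ℤ) (k : ℕ) (q : ℝ) (w : ℝ × ℝ) : ℂ :=
  ((cConst ω / Q ^ 3 : ℝ) : ℂ) * ∫ x : ℝ × ℝ,
    (((ω₀ (nrm2 x / Q ^ ((3 : ℝ) / 2)) *
      hFun ω ((k : ℝ) * q / Q) (((r.1 : ℝ) * x.1 + (r.2 : ℝ) * x.2) / Q ^ 2)) : ℝ) : ℂ) *
      e2pi (-(dot2 w x))

/-- The lattice `Λ(a,q) = {k a + q y}` as a subset of `ℤ²`. -/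
def Lambda (a : ℤ × ℤ) (q : ℕ) : Set (ℤ × ℤ) :=
  {v | ∃ k : ℤ, ∃ y : ℤ × ℤ, v = (k * a.1 + (q : ℤ) * y.1, k * a.2 + (q : ℤ) * y.2)}

/-- `k(r) = gcd(r₁,r₂)/gcd(gcd(r₁,r₂),q)`. -/
def kOf (r : ℤ × ℤ) (q : ℕ) : ℕ := Int.gcd r.1 r.2 / Nat.gcd (Int.gcd r.1 r.2) q

/-- The function `p_{Λ(a,q)}`. -/
def pLambda (ω ω₀ : ℝ → ℝ) (Q : ℝ) (q : ℕ) (a : ℤ × ℤ) (w : ℝ × ℝ) : ℂ :=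
  p1 ω ω₀ Q q w +
    ∑' r : ℤ × ℤ,
      Set.indicator {r : ℤ × ℤ | r ∈ Lambda a q ∧ r ≠ 0}
        (fun r => ((ω (nrm2 ((r.1 : ℝ), (r.2 : ℝ)) / Q ^ ((1 : ℝ) / 2)) : ℝ) : ℂ) *
          p2 ω ω₀ Q r (kOf r q) (q : ℝ) w) r

/-- Reduced residues `a mod q` (canonical representatives) with `gcd(a₁,a₂,q)=1`. -/
def residues (q : ℕ) : Finset (ℕ × ℕ) :=
  ((Finset.range q) ×ˢ (Finset.range q)).filter (fun a => Nat.gcd (Nat.gcd a.1 a.2) q = 1)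

/-- Normalized directional derivative along `ξ`. -/
def dirDeriv (ξ : ℝ × ℝ) (f : ℝ × ℝ → ℂ) : ℝ × ℝ → ℂ :=
  fun w => fderiv ℝ f w (ξ.1 / nrm2 ξ, ξ.2 / nrm2 ξ)

/-- Fourier transform `ω̂₀(t) = ∫ ω₀(x) e(−xt) dx`. -/
def fourierW0 (ω₀ : ℝ → ℝ) (t : ℝ) : ℂ := ∫ x : ℝ, ((ω₀ x : ℝ) : ℂ) * e2pi (-(x * t))

/-- `|M(w)x|` for the 3×2 matrix `M(w)`. -/
def Mnorm (Q : ℝ) (w : ℝ × ℝ) (x : ℝ × ℝ) : ℝ :=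
  Real.sqrt (x.1 ^ 2 / Q + x.2 ^ 2 / Q + Q ^ 2 * (w.1 * x.2 - w.2 * x.1) ^ 2)

/-- `μ_{M(w)}(Λ(a,q))`: infimum of `|M(w)x|` over nonzero lattice points. -/
def muM (Q : ℝ) (w : ℝ × ℝ) (a : ℤ × ℤ) (q : ℕ) : ℝ :=
  sInf {t : ℝ | ∃ v : ℤ × ℤ, v ∈ Lambda a q ∧ v ≠ 0 ∧ t = Mnorm Q w ((v.1 : ℝ), (v.2 : ℝ))}

/-- Quadratic form attached to an integer matrix, over any commutative ring. -/
def quadEval {s : ℕ} {R : Type*} [CommRing R] (M : Matrix (Fin s) (Fin s) ℤ)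
    (x : Fin s → R) : R :=
  ∑ i, ∑ j, (M i j : R) * x i * x j

/-- `e_q(n) = exp(2πin/q)` for an integer `n`. -/
def eqc (q : ℕ) (n : ℤ) : ℂ := e2pi ((n : ℝ) / (q : ℝ))

/-- The exponential sum `D_q(u)`. -/
def Dq (s : ℕ) (M₁ M₂ : Matrix (Fin s) (Fin s) ℤ) (q : ℕ) (u : Fin s → ℤ) : ℂ :=
  ∑ a ∈ residues q, ∑ b ∈ Fintype.piFinset (fun _ : Fin s => Finset.range q),
    eqc q ((a.1 : ℤ) * quadEval M₁ (fun i => (b i : ℤ)) +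
      (a.2 : ℤ) * quadEval M₂ (fun i => (b i : ℤ)) + ∑ i, (b i : ℤ) * u i)

/-- The exponential sum `S_{q,dc}(u)`. -/
def Sq (s : ℕ) (M₁ M₂ : Matrix (Fin s) (Fin s) ℤ) (q d : ℕ) (c : ℤ × ℤ)
    (u : Fin s → ℤ) : ℂ :=
  ∑ a ∈ (residues q).filter
      (fun a => (q : ℤ) ∣ (d : ℤ) * (c.1 * (a.2 : ℤ) - c.2 * (a.1 : ℤ))),
    ∑ b ∈ Fintype.piFinset (fun _ : Fin s => Finset.range q),
      eqc q ((a.1 : ℤ) * quadEval M₁ (fun i => (b i : ℤ)) +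
        (a.2 : ℤ) * quadEval M₂ (fun i => (b i : ℤ)) + ∑ i, (b i : ℤ) * u i)

/-- The pair of quadratic forms given by `M₁, M₂` is nonsingular: at every nonzero
complex common zero the gradients (equivalently `M₁x`, `M₂x`) are linearly independent. -/
def NonsingularPair (s : ℕ) (M₁ M₂ : Matrix (Fin s) (Fin s) ℤ) : Prop :=
  ∀ x : Fin s → ℂ, x ≠ 0 →
    quadEval M₁ x = 0 → quadEval M₂ x = 0 →
    LinearIndependent ℂ
      ![(M₁.map (fun z : ℤ => (z : ℂ))).mulVec x, (M₂.map (fun z : ℤ => (z : ℂ))).mulVec x]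

/-- Euclidean norm on `Fin m → ℝ`. -/
def enorm' {m : ℕ} (v : Fin m → ℝ) : ℝ := Real.sqrt (∑ i, v i ^ 2)

end

lemma e2pi_zero : e2pi 0 = 1 := by simp [e2pi]

lemma e2pi_add (x y : ℝ) : e2pi (x + y) = e2pi x * e2pi y := by
  simp only [e2pi, ← Complex.exp_add]
  congr 1
  push_cast
  ring

lemma norm_e2pi (x : ℝ) : ‖e2pi x‖ = 1 := by
  have h : (2 * (Real.pi : ℂ) * Complex.I * x) = ((2 * Real.pi * x : ℝ) : ℂ) * Complex.I := by
    push_cast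
    ring
  rw [e2pi, h, Complex.norm_exp_ofReal_mul_I]

lemma e2pi_int (n : ℤ) : e2pi n = 1 := by
  rw [e2pi, Complex.exp_eq_one_iff]
  exact ⟨n, by push_cast; ring⟩

lemma e2pi_eq_one_iff (x : ℝ) : e2pi x = 1 ↔ ∃ n : ℤ, x = n := by
  refine ⟨fun h => ?_, ?_⟩
  · rw [e2pi, Complex.exp_eq_one_iff] at h
    obtain ⟨n, hn⟩ := h
    refine ⟨n, ?_⟩
    have h2 : (2 * (Real.pi : ℂ) * Complex.I) ≠ 0 := Complex.two_pi_I_ne_zero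
    have h3 : (x : ℂ) = (n : ℂ) := by
      apply mul_left_cancel₀ h2
      rw [hn]
      ring
    exact_mod_cast h3
  · rintro ⟨n, rfl⟩
    exact e2pi_int n

lemma e2pi_nat_mul (n : ℕ) (x : ℝ) : e2pi (n * x) = e2pi x ^ n := by
  rw [e2pi, e2pi, ← Complex.exp_nat_mul]
  congr 1
  push_cast
  ring

lemma contDiff_e2pi : ContDiff ℝ (⊤ : ℕ∞) e2pi := by
  unfold e2pi
  have h : ContDiff ℝ (⊤ : ℕ∞) (fun x : ℝ => (x : ℂ)) := Complex.ofRealCLM.contDiff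
  exact (contDiff_const.mul h).cexp

lemma continuous_e2pi : Continuous e2pi := contDiff_e2pi.continuous

lemma hasDerivAt_e2pi (x : ℝ) : HasDerivAt e2pi (2 * Real.pi * Complex.I * e2pi x) x := by
  have h1 : HasDerivAt (fun x : ℝ => (x : ℂ)) 1 x := Complex.ofRealCLM.hasDerivAt
  have h2 := (h1.const_mul (2 * (Real.pi : ℂ) * Complex.I)).cexp
  refine HasDerivAt.congr_deriv (f := e2pi) h2 ?_
  rw [e2pi]
  ring

/-- Rapid decay, along any finite list of directions, of the partial Fourier transform of a smooth
compactly supported function depending on a parameter. -/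
theorem exists_fourier_decay {E V : Type*} [NormedAddCommGroup E] [NormedSpace ℝ E]
    [NormedAddCommGroup V] [NormedSpace ℝ V] [FiniteDimensional ℝ V] [MeasurableSpace V]
    [BorelSpace V] (μ : Measure V) [μ.IsAddHaarMeasure] (L : List V) :
    ∀ g : E × V → ℂ, ContDiff ℝ (⊤ : ℕ∞) g → HasCompactSupport g →
      ∃ K : ℝ, 0 ≤ K ∧ ∀ (p : E) (l : V →L[ℝ] ℝ),
        ‖∫ x, g (p, x) * e2pi (-(l x)) ∂μ‖ * (L.map fun v => 1 + |l v|).prod ≤ K := by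
  have slice_cs : ∀ g : E × V → ℂ, HasCompactSupport g → ∀ p : E,
      HasCompactSupport (fun x : V => g (p, x)) := by
    intro g hg p
    refine HasCompactSupport.intro (hg.isCompact.image continuous_snd) (fun x hx => ?_)
    by_contra h
    exact hx ⟨(p, x), subset_tsupport _ h, rfl⟩
  induction L with
  | nil =>
    intro g hg hgc
    obtain ⟨B, hB⟩ := hgc.exists_bound_of_continuous hg.continuous
    have hB0 : 0 ≤ B := (norm_nonneg _).trans (hB 0)
    have hKc : IsCompact (Prod.snd '' tsupport g) := hgc.isCompact.image continuous_snd
    refine ⟨B * μ.real (Prod.snd '' tsupport g), by positivity, fun p l => ?_⟩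
    simp only [List.map_nil, List.prod_nil, mul_one]
    rw [← setIntegral_eq_integral_of_forall_compl_eq_zero (s := Prod.snd '' tsupport g)]
    · refine norm_setIntegral_le_of_norm_le_const hKc.measure_lt_top (fun x _ => ?_)
      rw [norm_mul, norm_e2pi, mul_one]
      exact hB _
    · intro x hx
      have : g (p, x) = 0 := by
        by_contra h
        exact hx ⟨(p, x), subset_tsupport _ h, rfl⟩
      rw [this, zero_mul]
  | cons v L ih =>
    intro g hg hgc
    have hg' : ContDiff ℝ (⊤ : ℕ∞) (fun z => fderiv ℝ g z ((0 : E), v)) :=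
      (hg.fderiv_right (m := (⊤ : ℕ∞)) (by simp)).clm_apply contDiff_const
    have hgc' : HasCompactSupport (fun z => fderiv ℝ g z ((0 : E), v)) :=
      hgc.fderiv_apply ℝ _
    obtain ⟨K₁, hK₁, h₁⟩ := ih g hg hgc
    obtain ⟨K₂, hK₂, h₂⟩ := ih _ hg' hgc'
    refine ⟨K₁ + K₂, by positivity, fun p l => ?_⟩
    set P := (L.map fun v => 1 + |l v|).prod with hP
    have hP0 : 0 ≤ P := List.prod_nonneg (by
      intro a ha
      obtain ⟨b, -, rfl⟩ := List.mem_map.1 ha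
      positivity)
    have hdiff : Differentiable ℝ g := hg.differentiable (by simp)
    have hslice : ∀ x, HasFDerivAt (fun x : V => g (p, x))
        ((fderiv ℝ g (p, x)).comp (ContinuousLinearMap.inr ℝ E V)) x := by
      intro x
      exact (hdiff (p, x)).hasFDerivAt.comp x (hasFDerivAt_prodMk_right p x)
    have he : ∀ x, HasFDerivAt (fun x : V => e2pi (-(l x)))
        ((-l).smulRight (2 * Real.pi * Complex.I * e2pi (-(l x)))) x := by
      intro x
      have := (hasDerivAt_e2pi (-(l x))).hasFDerivAt.comp x (-l).hasFDerivAt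
      refine HasFDerivAt.congr_fderiv (f := fun x : V => e2pi (-(l x))) this ?_
      ext y
      simp
    have hec : Continuous (fun x : V => e2pi (-(l x))) :=
      continuous_e2pi.comp l.continuous.neg
    have hgs : Continuous (fun x : V => g (p, x)) := hg.continuous.comp (by fun_prop)
    have hgs' : Continuous (fun x : V => fderiv ℝ g (p, x) ((0 : E), v)) :=
      hg'.continuous.comp (by fun_prop)
    have hibp := integral_bilinear_hasFDerivAt_right_eq_neg_left_of_integrable (μ := μ) (v := v)
      (B := ContinuousLinearMap.mul ℝ ℂ) (f := fun x : V => g (p, x))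
      (f' := fun x => (fderiv ℝ g (p, x)).comp (ContinuousLinearMap.inr ℝ E V))
      (g := fun x : V => e2pi (-(l x)))
      (g' := fun x => (-l).smulRight (2 * Real.pi * Complex.I * e2pi (-(l x))))
      (by
        simp only [ContinuousLinearMap.mul_apply', ContinuousLinearMap.comp_apply,
          ContinuousLinearMap.inr_apply]
        exact (hgs'.mul hec).integrable_of_hasCompactSupport
          ((slice_cs _ hgc' p).mul_right))
      (by
        simp only [ContinuousLinearMap.mul_apply', ContinuousLinearMap.smulRight_apply]
        exact (hgs.mul (by fun_prop)).integrable_of_hasCompactSupport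
          ((slice_cs _ hgc p).mul_right))
      (by
        simp only [ContinuousLinearMap.mul_apply']
        exact (hgs.mul hec).integrable_of_hasCompactSupport
          ((slice_cs _ hgc p).mul_right))
      (fun x _ => hslice x) (fun x _ => he x)
    simp only [ContinuousLinearMap.mul_apply', ContinuousLinearMap.comp_apply,
      ContinuousLinearMap.inr_apply, ContinuousLinearMap.smulRight_apply,
      _root_.neg_apply] at hibp
    have hL : ∫ x, g (p, x) * (-(l v) • (2 * Real.pi * Complex.I * e2pi (-(l x)))) ∂μ =
        (-(l v) * (2 * Real.pi * Complex.I)) * ∫ x, g (p, x) * e2pi (-(l x)) ∂μ := by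
      rw [← integral_const_mul]
      congr 1
      ext x
      simp only [Complex.real_smul]
      push_cast
      ring
    rw [hL] at hibp
    have hn := congrArg norm hibp
    rw [norm_neg, norm_mul, norm_mul, norm_neg] at hn
    have hpi : ‖(2 * Real.pi * Complex.I : ℂ)‖ = 2 * Real.pi := by
      simp [Real.pi_pos.le]
    rw [hpi, Complex.norm_real, Real.norm_eq_abs] at hn
    have h1 := h₁ p l
    have h2 := h₂ p l
    rw [← hP] at h1 h2
    simp only [List.map_cons, List.prod_cons]
    rw [← hP]
    set I₀ := ‖∫ x, g (p, x) * e2pi (-(l x)) ∂μ‖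
    have hI : |l v| * I₀ ≤ ‖∫ x, fderiv ℝ g (p, x) ((0 : E), v) * e2pi (-(l x)) ∂μ‖ := by
      rw [← hn]
      have : 0 ≤ |l v| * I₀ := by positivity
      nlinarith [Real.pi_gt_three]
    calc I₀ * ((1 + |l v|) * P) = I₀ * P + (|l v| * I₀) * P := by ring
      _ ≤ K₁ + K₂ := by
        have := mul_le_mul_of_nonneg_right hI hP0
        linarith

theorem exists_fourier_decay_real {E : Type*} [NormedAddCommGroup E] [NormedSpace ℝ E]
    (g : E × ℝ → ℂ) (hg : ContDiff ℝ (⊤ : ℕ∞) g) (hgc : HasCompactSupport g) (N : ℕ) :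
    ∃ K : ℝ, 0 ≤ K ∧ ∀ (p : E) (ξ : ℝ),
      ‖∫ x, g (p, x) * e2pi (-(x * ξ))‖ ≤ K / (1 + |ξ|) ^ N := by
  obtain ⟨K, hK, h⟩ := exists_fourier_decay volume (List.replicate N (1 : ℝ)) g hg hgc
  refine ⟨K, hK, fun p ξ => ?_⟩
  rw [le_div_iff₀ (by positivity)]
  have := h p (ξ • ContinuousLinearMap.id ℝ ℝ)
  simpa [mul_comm ξ] using this

theorem exists_fourier_decay_plane {E : Type*} [NormedAddCommGroup E] [NormedSpace ℝ E]
    (g : E × (ℝ × ℝ) → ℂ) (hg : ContDiff ℝ (⊤ : ℕ∞) g) (hgc : HasCompactSupport g) (N : ℕ) :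
    ∃ K : ℝ, 0 ≤ K ∧ ∀ (p : E) (ξ η : ℝ),
      ‖∫ x : ℝ × ℝ, g (p, x) * e2pi (-(x.1 * ξ + x.2 * η))‖ ≤
        K / ((1 + |ξ|) ^ N * (1 + |η|) ^ N) := by
  obtain ⟨K, hK, h⟩ := exists_fourier_decay volume
    (List.replicate N ((1 : ℝ), (0 : ℝ)) ++ List.replicate N ((0 : ℝ), (1 : ℝ))) g hg hgc
  refine ⟨K, hK, fun p ξ η => ?_⟩
  rw [le_div_iff₀ (by positivity)]
  have := h p (ξ • ContinuousLinearMap.fst ℝ ℝ ℝ + η • ContinuousLinearMap.snd ℝ ℝ ℝ)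
  simpa [mul_comm ξ, mul_comm η] using this

theorem exists_fourier_decay_of_real (g : ℝ → ℂ) (hg : ContDiff ℝ (⊤ : ℕ∞) g)
    (hgc : HasCompactSupport g) (N : ℕ) :
    ∃ K : ℝ, 0 ≤ K ∧ ∀ ξ : ℝ, ‖∫ x, g x * e2pi (-(x * ξ))‖ ≤ K / (1 + |ξ|) ^ N := by
  obtain ⟨K, hK, h⟩ := exists_fourier_decay_real (E := PUnit.{1}) (fun z => g z.2)
    (hg.comp contDiff_snd) (hgc.comp_homeomorph (Homeomorph.punitProd ℝ)) N
  exact ⟨K, hK, fun ξ => h PUnit.unit ξ⟩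

theorem exists_fourier_decay_of_plane (g : ℝ × ℝ → ℂ) (hg : ContDiff ℝ (⊤ : ℕ∞) g)
    (hgc : HasCompactSupport g) (N : ℕ) :
    ∃ K : ℝ, 0 ≤ K ∧ ∀ ξ η : ℝ,
      ‖∫ x : ℝ × ℝ, g x * e2pi (-(x.1 * ξ + x.2 * η))‖ ≤
        K / ((1 + |ξ|) ^ N * (1 + |η|) ^ N) := by
  obtain ⟨K, hK, h⟩ := exists_fourier_decay_plane (E := PUnit.{1}) (fun z => g z.2)
    (hg.comp contDiff_snd) (hgc.comp_homeomorph (Homeomorph.punitProd (ℝ × ℝ))) N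
  exact ⟨K, hK, fun ξ η => h PUnit.unit ξ η⟩

lemma summable_inv_one_add_abs_sq : Summable fun n : ℤ => 1 / (1 + |(n : ℝ)|) ^ 2 := by
  have h := (Real.summable_one_div_int_pow (p := 2)).2 (by norm_num)
  refine Summable.of_norm_bounded_eventually (g := fun n : ℤ => 1 / (n : ℝ) ^ 2) h ?_
  filter_upwards [(Set.finite_singleton (0 : ℤ)).compl_mem_cofinite] with n hn
  have hn' : (n : ℝ) ≠ 0 := by simpa using hn
  rw [Real.norm_eq_abs, abs_of_nonneg (by positivity), ← sq_abs (n : ℝ)]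
  have : 0 < |(n : ℝ)| := abs_pos.2 hn'
  gcongr
  linarith

lemma one_div_shift_le (h θ : ℝ) (hh : 0 < h) (hh1 : h ≤ 1) (n : ℤ) :
    1 / (1 + |((n : ℝ) + θ) / h|) ^ 2 ≤ 4 * (1 / (1 + |((n + ⌊θ⌋ : ℤ) : ℝ)|) ^ 2) := by
  have h1 : |(n : ℝ) + θ| ≤ |((n : ℝ) + θ) / h| := by
    rw [abs_div, abs_of_pos hh]
    exact le_div_self (abs_nonneg _) hh hh1
  have h2 : |((n + ⌊θ⌋ : ℤ) : ℝ)| ≤ |(n : ℝ) + θ| + 1 := by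
    have h3 := Int.floor_le θ
    have h4 := Int.lt_floor_add_one θ
    push_cast
    rw [abs_le]
    constructor
    · have := neg_abs_le ((n : ℝ) + θ)
      linarith
    · have := le_abs_self ((n : ℝ) + θ)
      linarith
  have h5 : (1 + |((n + ⌊θ⌋ : ℤ) : ℝ)|) ≤ 2 * (1 + |((n : ℝ) + θ) / h|) := by
    have := abs_nonneg (((n : ℝ) + θ) / h)
    linarith
  rw [mul_one_div, div_le_div_iff₀ (by positivity) (by positivity), one_mul]
  have := pow_le_pow_left₀ (by positivity) h5 2
  linarith

lemma summable_shift (h θ : ℝ) (hh : 0 < h) (hh1 : h ≤ 1) :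
    Summable fun n : ℤ => 1 / (1 + |((n : ℝ) + θ) / h|) ^ 2 := by
  refine Summable.of_nonneg_of_le (fun n => by positivity) (one_div_shift_le h θ hh hh1) ?_
  exact (((Equiv.addRight ⌊θ⌋).summable_iff (f := fun n : ℤ => 1 / (1 + |(n : ℝ)|) ^ 2)).2
    summable_inv_one_add_abs_sq).mul_left 4

lemma tsum_shift_le (h θ : ℝ) (hh : 0 < h) (hh1 : h ≤ 1) :
    ∑' n : ℤ, 1 / (1 + |((n : ℝ) + θ) / h|) ^ 2 ≤
      4 * ∑' n : ℤ, 1 / (1 + |(n : ℝ)|) ^ 2 := by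
  have h1 := ((Equiv.addRight ⌊θ⌋).summable_iff (f := fun n : ℤ => 1 / (1 + |(n : ℝ)|) ^ 2)).2
    summable_inv_one_add_abs_sq
  have h2 := (Equiv.addRight ⌊θ⌋).tsum_eq (fun n : ℤ => 1 / (1 + |(n : ℝ)|) ^ 2)
  rw [← h2, ← tsum_mul_left]
  exact (summable_shift h θ hh hh1).tsum_le_tsum (one_div_shift_le h θ hh hh1) (h1.mul_left 4)

/-- Poisson summation for continuous compactly supported functions on the line. -/
theorem poisson_real (f : ℝ → ℂ) (hf : Continuous f) (hfc : HasCompactSupport f)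
    (hs : Summable fun n : ℤ => ∫ x, f x * e2pi (-(x * n))) :
    ∑' n : ℤ, f n = ∑' n : ℤ, ∫ x, f x * e2pi (-(x * n)) := by
  have hF : ∀ ξ : ℝ, FourierTransform.fourier f ξ = ∫ x, f x * e2pi (-(x * ξ)) := by
    intro ξ
    rw [Real.fourier_real_eq_integral_exp_smul]
    congr 1
    ext x
    rw [smul_eq_mul, mul_comm, e2pi]
    congr 2
    push_cast
    ring
  have h0 : f =O[Filter.cocompact ℝ] fun x : ℝ => |x| ^ (-(2 : ℝ)) := by
    refine Filter.EventuallyEq.trans_isBigO ?_ (Asymptotics.isBigO_zero _ _)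
    filter_upwards [hfc.isCompact.compl_mem_cocompact] with x hx
    exact image_eq_zero_of_notMem_tsupport hx
  have := Real.tsum_eq_tsum_fourier_of_rpow_decay_of_summable hf one_lt_two h0
    (by simpa only [hF] using hs) 0
  simpa [hF] using this

lemma HasCompactSupport.slice_snd {E V F : Type*} [TopologicalSpace E] [TopologicalSpace V]
    [R1Space V] [Zero F] {g : E × V → F} (hg : HasCompactSupport g) (p : E) :
    HasCompactSupport (fun x : V => g (p, x)) := by
  refine HasCompactSupport.intro (hg.isCompact.image continuous_snd) (fun x hx => ?_)
  by_contra h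
  exact hx ⟨(p, x), subset_tsupport _ h, rfl⟩

lemma continuous_marginal (g : ℝ × ℝ → ℂ) (hg : Continuous g) (hgc : HasCompactSupport g) :
    Continuous fun u => ∫ s, g (u, s) := by
  have hK : IsCompact (Prod.snd '' tsupport g) := hgc.isCompact.image continuous_snd
  have h : (fun u => ∫ s, g (u, s)) = fun u => ∫ s in Prod.snd '' tsupport g, g (u, s) := by
    ext u
    rw [setIntegral_eq_integral_of_forall_compl_eq_zero]
    intro x hx
    by_contra h
    exact hx ⟨(u, x), subset_tsupport _ h, rfl⟩
  rw [h]
  exact continuous_parametric_integral_of_continuous (f := fun u s => g (u, s)) hg hK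

lemma hasCompactSupport_marginal (g : ℝ × ℝ → ℂ) (hgc : HasCompactSupport g) :
    HasCompactSupport fun u => ∫ s, g (u, s) := by
  refine HasCompactSupport.intro (hgc.isCompact.image continuous_fst) (fun u hu => ?_)
  have : ∀ s, g (u, s) = 0 := by
    intro s
    by_contra h
    exact hu ⟨(u, s), subset_tsupport _ h, rfl⟩
  simp [this]

lemma integral_marginal_mul (g : ℝ × ℝ → ℂ) (hg : Continuous g) (hgc : HasCompactSupport g)
    (k : ℝ → ℂ) (hk : Continuous k) :
    ∫ u, (∫ s, g (u, s)) * k u = ∫ x : ℝ × ℝ, g x * k x.1 := by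
  have hi : Integrable (fun x : ℝ × ℝ => g x * k x.1) (volume.prod volume) :=
    (hg.mul (hk.comp continuous_fst)).integrable_of_hasCompactSupport hgc.mul_right
  rw [Measure.volume_eq_prod, integral_prod _ hi]
  congr 1
  ext u
  exact (integral_mul_const _ _).symm

lemma summable_prod_inv_sq (K : ℝ) : Summable fun n : ℤ × ℤ =>
    K * ((1 / (1 + |(n.1 : ℝ)|) ^ 2) * (1 / (1 + |(n.2 : ℝ)|) ^ 2)) :=
  (summable_inv_one_add_abs_sq.mul_of_nonneg summable_inv_one_add_abs_sq
    (fun n => by positivity) (fun n => by positivity)).mul_left K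

/-- Poisson summation for smooth compactly supported functions on the plane. -/
theorem poisson_plane (g : ℝ × ℝ → ℂ) (hg : ContDiff ℝ (⊤ : ℕ∞) g) (hgc : HasCompactSupport g) :
    ∑' r : ℤ × ℤ, g (r.1, r.2) =
      ∑' n : ℤ × ℤ, ∫ x : ℝ × ℝ, g x * e2pi (-(x.1 * n.1 + x.2 * n.2)) := by
  obtain ⟨K, hK, hdec⟩ := exists_fourier_decay_of_plane g hg hgc 2
  obtain ⟨K₁, hK₁, hdec₁⟩ := exists_fourier_decay_real g hg hgc 2
  have hgcont := hg.continuous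
  obtain ⟨R, hR⟩ := hgc.isCompact.isBounded.exists_norm_le
  have hvan : ∀ x : ℝ × ℝ, R < |x.1| → g x = 0 := by
    intro x hx
    by_contra h
    have h1 := hR x (subset_tsupport _ h)
    have h2 := norm_fst_le x
    rw [Real.norm_eq_abs] at h2
    linarith
  have hvan' : ∀ x : ℝ × ℝ, R < |x.2| → g x = 0 := by
    intro x hx
    by_contra h
    have h1 := hR x (subset_tsupport _ h)
    have h2 := norm_snd_le x
    rw [Real.norm_eq_abs] at h2
    linarith
  have hsF : Summable fun n : ℤ × ℤ =>
      ∫ x : ℝ × ℝ, g x * e2pi (-(x.1 * n.1 + x.2 * n.2)) := by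
    refine Summable.of_norm_bounded (summable_prod_inv_sq K) (fun n => ?_)
    refine (hdec n.1 n.2).trans (le_of_eq ?_)
    field_simp
  have hsP : Summable fun n : ℤ × ℤ => ∫ s, g (n.1, s) * e2pi (-(s * n.2)) := by
    refine Summable.of_norm_bounded (summable_prod_inv_sq (K₁ * (1 + |R|) ^ 2)) (fun n => ?_)
    rcases le_or_gt (|(n.1 : ℝ)|) R with h | h
    · refine (hdec₁ n.1 n.2).trans ?_
      have h1 : (1 + |(n.1 : ℝ)|) ^ 2 ≤ (1 + |R|) ^ 2 := by
        have := h.trans (le_abs_self R)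
        exact pow_le_pow_left₀ (by positivity) (by linarith) 2
      have h2 : 1 ≤ (1 + |R|) ^ 2 * (1 / (1 + |(n.1 : ℝ)|) ^ 2) := by
        rw [mul_one_div, le_div_iff₀ (by positivity), one_mul]
        exact h1
      calc K₁ / (1 + |(n.2 : ℝ)|) ^ 2 = (K₁ / (1 + |(n.2 : ℝ)|) ^ 2) * 1 := by ring
        _ ≤ (K₁ / (1 + |(n.2 : ℝ)|) ^ 2) * ((1 + |R|) ^ 2 * (1 / (1 + |(n.1 : ℝ)|) ^ 2)) := by
          gcongr
        _ = _ := by ring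
    · have : ∀ s, g (n.1, s) = 0 := fun s => hvan _ h
      simp only [this, zero_mul, integral_zero, norm_zero]
      positivity
  have hsg : Summable fun r : ℤ × ℤ => g (r.1, r.2) := by
    refine summable_of_hasFiniteSupport ?_
    refine ((Finset.Icc (-⌊R⌋) ⌊R⌋) ×ˢ (Finset.Icc (-⌊R⌋) ⌊R⌋)).finite_toSet.subset ?_
    intro r hr
    rw [Function.mem_support] at hr
    have h1 : |(r.1 : ℝ)| ≤ R := by
      by_contra h
      exact hr (hvan (r.1, r.2) (not_le.1 h))
    have h2 : |(r.2 : ℝ)| ≤ R := by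
      by_contra h
      exact hr (hvan' (r.1, r.2) (not_le.1 h))
    have aux : ∀ n : ℤ, |(n : ℝ)| ≤ R → n ∈ Finset.Icc (-⌊R⌋) ⌊R⌋ := by
      intro n hn
      have hn2 : ((|n| : ℤ) : ℝ) ≤ R := by
        push_cast
        exact hn
      exact Finset.mem_Icc.2 (abs_le.1 (Int.le_floor.2 hn2))
    exact Finset.mem_coe.2 (Finset.mem_product.2 ⟨aux _ h1, aux _ h2⟩)
  have hrow : ∀ m : ℤ, ∑' k : ℤ, g (m, k) = ∑' k : ℤ, ∫ s, g (m, s) * e2pi (-(s * k)) := by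
    intro m
    exact poisson_real (fun s => g (m, s)) (by fun_prop) (hgc.slice_snd _) (hsP.prod_factor m)
  have hcol : ∀ k : ℤ, ∑' m : ℤ, ∫ s, g (m, s) * e2pi (-(s * k)) =
      ∑' m : ℤ, ∫ x : ℝ × ℝ, g x * e2pi (-(x.1 * m + x.2 * k)) := by
    intro k
    have hc : Continuous fun x : ℝ × ℝ => g x * e2pi (-(x.2 * k)) :=
      hgcont.mul (continuous_e2pi.comp (by fun_prop))
    have hcc : HasCompactSupport fun x : ℝ × ℝ => g x * e2pi (-(x.2 * k)) := hgc.mul_right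
    have hm : ∀ m : ℤ, ∫ u, (∫ s, g (u, s) * e2pi (-(s * k))) * e2pi (-(u * m)) =
        ∫ x : ℝ × ℝ, g x * e2pi (-(x.1 * m + x.2 * k)) := by
      intro m
      have := integral_marginal_mul _ hc hcc (fun u => e2pi (-(u * m)))
        (continuous_e2pi.comp (by fun_prop))
      rw [this]
      congr 1
      ext x
      rw [mul_assoc, ← e2pi_add]
      congr 2
      ring
    have hs : Summable fun m : ℤ => ∫ x : ℝ × ℝ, g x * e2pi (-(x.1 * m + x.2 * k)) :=
      ((Equiv.prodComm ℤ ℤ).summable_iff.2 hsF).prod_factor k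
    have := poisson_real _ (continuous_marginal _ hc hcc) (hasCompactSupport_marginal _ hcc)
      (by simpa only [hm] using hs)
    simpa only [hm] using this
  rw [hsg.tsum_prod, hsF.tsum_prod]
  simp only [hrow]
  rw [← Summable.tsum_comm (f := fun m k : ℤ => ∫ s, g (m, s) * e2pi (-(s * k))) hsP,
    ← Summable.tsum_comm (f := fun m k : ℤ => ∫ x : ℝ × ℝ, g x * e2pi (-(x.1 * m + x.2 * k))) hsF]
  exact tsum_congr hcol

/-- Poisson summation on a scaled lattice with a linear phase. -/
theorem poisson_plane_scaled (g : ℝ × ℝ → ℂ) (hg : ContDiff ℝ (⊤ : ℕ∞) g)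
    (hgc : HasCompactSupport g) (h θ₁ θ₂ : ℝ) (hh : 0 < h) :
    ∑' r : ℤ × ℤ, g (h * r.1, h * r.2) * e2pi (-(r.1 * θ₁ + r.2 * θ₂)) =
      ((h ^ 2)⁻¹ : ℝ) * ∑' n : ℤ × ℤ, ∫ x : ℝ × ℝ,
        g x * e2pi (-(x.1 * ((n.1 + θ₁) / h) + x.2 * ((n.2 + θ₂) / h))) := by
  have hhom : HasCompactSupport fun x : ℝ × ℝ => g (h • x) :=
    hgc.comp_homeomorph (Homeomorph.smulOfNeZero h hh.ne')
  have hsm : ContDiff ℝ (⊤ : ℕ∞) fun x : ℝ × ℝ => g (h • x) * e2pi (-(x.1 * θ₁ + x.2 * θ₂)) :=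
    (hg.comp (contDiff_const_smul h)).mul (contDiff_e2pi.comp (by fun_prop))
  have := poisson_plane _ hsm hhom.mul_right
  simp only [Prod.smul_mk, smul_eq_mul] at this
  rw [this, ← tsum_mul_left]
  refine tsum_congr (fun n => ?_)
  have hc := Measure.integral_comp_smul (volume : Measure (ℝ × ℝ))
    (fun x : ℝ × ℝ => g x * e2pi (-(x.1 * ((n.1 + θ₁) / h) + x.2 * ((n.2 + θ₂) / h)))) h
  have hfr : Module.finrank ℝ (ℝ × ℝ) = 2 := by simp
  rw [hfr, abs_of_pos (by positivity), Complex.real_smul] at hc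
  rw [← hc]
  congr 1
  ext x
  rw [mul_assoc, ← e2pi_add]
  congr 2
  simp only [Prod.smul_fst, Prod.smul_snd, smul_eq_mul]
  field_simp
  ring

/-- Riemann sums of a function with rapidly decaying Fourier transform approximate its integral. -/
theorem norm_riemann_sum_sub_integral_le (f : ℝ → ℂ) (hf : Continuous f)
    (hfc : HasCompactSupport f) (K : ℝ) (N : ℕ)
    (hdec : ∀ ξ : ℝ, ‖∫ x, f x * e2pi (-(x * ξ))‖ ≤ K / (1 + |ξ|) ^ (N + 2))
    (h : ℝ) (hh : 0 < h) (hh2 : h ≤ 2) :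
    ‖h * ∑' j : ℤ, f (h * j) - ∫ x, f x‖ ≤
      K * h ^ N * (4 * ∑' n : ℤ, 1 / (1 + |(n : ℝ)|) ^ 2) := by
  have hK : 0 ≤ K := by simpa using (norm_nonneg _).trans (hdec 0)
  have hFT : ∀ n : ℤ, ∫ x, f (h * x) * e2pi (-(x * n)) =
      (h⁻¹ : ℝ) * ∫ x, f x * e2pi (-(x * (n / h))) := by
    intro n
    have := Measure.integral_comp_mul_left (fun x => f x * e2pi (-(x * (n / h)))) h
    rw [abs_of_pos (by positivity), Complex.real_smul] at this
    rw [← this]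
    congr 1
    ext x
    congr 3
    field_simp
  have hbd : ∀ n : ℤ, n ≠ 0 → ‖∫ x, f x * e2pi (-(x * (n / h)))‖ ≤
      K * h ^ N * 4 * (1 / (1 + |(n : ℝ)|) ^ 2) := by
    intro n hn
    refine (hdec _).trans ?_
    have hn1 : (1 : ℝ) ≤ |(n : ℝ)| := by
      exact_mod_cast Int.one_le_abs hn
    have habs : |(n : ℝ) / h| = |(n : ℝ)| / h := by rw [abs_div, abs_of_pos hh]
    rw [habs]
    have e1 : 1 / h ≤ 1 + |(n : ℝ)| / h := by
      have : 1 / h ≤ |(n : ℝ)| / h := by gcongr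
      linarith
    have e2 : (1 + |(n : ℝ)|) / 2 ≤ 1 + |(n : ℝ)| / h := by
      have : |(n : ℝ)| / 2 ≤ |(n : ℝ)| / h := by gcongr
      linarith
    calc K / (1 + |(n : ℝ)| / h) ^ (N + 2)
        = K / ((1 + |(n : ℝ)| / h) ^ N * (1 + |(n : ℝ)| / h) ^ 2) := by rw [pow_add]
      _ ≤ K / ((1 / h) ^ N * ((1 + |(n : ℝ)|) / 2) ^ 2) := by gcongr
      _ = _ := by
        rw [one_div, inv_pow]
        field_simp
        ring
  have hS := summable_inv_one_add_abs_sq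
  have hsum : Summable fun n : ℤ => ∫ x, f x * e2pi (-(x * (n / h))) := by
    refine Summable.of_norm_bounded_eventually (hS.mul_left (K * h ^ N * 4)) ?_
    filter_upwards [(Set.finite_singleton (0 : ℤ)).compl_mem_cofinite] with n hn
    exact hbd n (by simpa using hn)
  have hP := poisson_real (fun x => f (h * x)) (by fun_prop)
    (hfc.comp_homeomorph (Homeomorph.mulLeft₀ h hh.ne')) (by
      simp only [hFT]
      exact hsum.mul_left _)
  simp only [hFT] at hP
  rw [tsum_mul_left] at hP
  have h0 : ∫ x, f x = ∫ x, f x * e2pi (-(x * (((0 : ℤ) : ℝ) / h))) := by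
    simp [e2pi_zero]
  rw [hP, ← mul_assoc]
  have hh' : (h : ℂ) * ((h⁻¹ : ℝ) : ℂ) = 1 := by
    rw [← Complex.ofReal_mul, mul_inv_cancel₀ hh.ne', Complex.ofReal_one]
  rw [hh', one_mul, hsum.tsum_eq_add_tsum_ite 0, h0, add_sub_cancel_left]
  have hT := hS.mul_left (K * h ^ N * 4)
  refine (tsum_of_norm_bounded hT.hasSum (fun n => ?_)).trans (le_of_eq ?_)
  · split_ifs with hn
    · simp only [norm_zero]
      positivity
    · exact hbd n hn
  · rw [tsum_mul_left]
    ring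

lemma mem_Lambda_iff (a : ℤ × ℤ) (q : ℕ) (hgcd : Nat.gcd (Int.gcd a.1 a.2) q = 1) (v : ℤ × ℤ) :
    v ∈ Lambda a q ↔ (q : ℤ) ∣ v.1 * a.2 - v.2 * a.1 := by
  constructor
  · rintro ⟨k, y, rfl⟩
    exact ⟨y.1 * a.2 - y.2 * a.1, by ring⟩
  · rintro ⟨d, hd⟩
    have h1 : (Int.gcd (Int.gcd a.1 a.2 : ℤ) (q : ℤ) : ℤ) = 1 := by
      rw [Int.gcd_natCast_natCast, hgcd, Nat.cast_one]
    have h2 := Int.gcd_eq_gcd_ab (Int.gcd a.1 a.2 : ℤ) (q : ℤ)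
    rw [h1, Int.gcd_eq_gcd_ab a.1 a.2] at h2
    set z := Int.gcdA (a.1 * Int.gcdA a.1 a.2 + a.2 * Int.gcdB a.1 a.2) (q : ℤ)
    set t := Int.gcdB (a.1 * Int.gcdA a.1 a.2 + a.2 * Int.gcdB a.1 a.2) (q : ℤ)
    set x := Int.gcdA a.1 a.2
    set y := Int.gcdB a.1 a.2
    refine ⟨z * (x * v.1 + y * v.2), (v.1 * t + z * y * d, v.2 * t - z * x * d), ?_⟩
    ext
    · linear_combination v.1 * h2 + z * y * hd
    · linear_combination v.2 * h2 - z * x * hd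

lemma muM_le (Q : ℝ) (w : ℝ × ℝ) (a : ℤ × ℤ) (q : ℕ) (v : ℤ × ℤ) (hv : v ∈ Lambda a q)
    (hv0 : v ≠ 0) : muM Q w a q ≤ Mnorm Q w ((v.1 : ℝ), (v.2 : ℝ)) := by
  refine csInf_le ⟨0, ?_⟩ ⟨v, hv, hv0, rfl⟩
  rintro t ⟨v, -, -, rfl⟩
  exact Real.sqrt_nonneg _

lemma sum_e2pi_mul_div (q : ℕ) (hq : 1 ≤ q) (d : ℤ) :
    ∑ m ∈ Finset.range q, e2pi (m * (d / q)) = if (q : ℤ) ∣ d then (q : ℂ) else 0 := by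
  have hq0 : (q : ℝ) ≠ 0 := by positivity
  simp only [e2pi_nat_mul]
  split_ifs with h
  · obtain ⟨c, rfl⟩ := h
    have : e2pi (((q : ℤ) * c : ℤ) / q : ℝ) = 1 := by
      rw [e2pi_eq_one_iff]
      exact ⟨c, by push_cast; field_simp⟩
    simp only [this]
    simp
  · have h1 : e2pi ((d : ℝ) / q) ≠ 1 := by
      rw [Ne, e2pi_eq_one_iff]
      rintro ⟨n, hn⟩
      refine h ⟨n, ?_⟩
      rw [div_eq_iff hq0] at hn
      have : (d : ℝ) = ((q * n : ℤ) : ℝ) := by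
        rw [hn]
        push_cast
        ring
      exact_mod_cast this
    rw [geom_sum_eq h1, ← e2pi_nat_mul]
    have : (q : ℝ) * (d / q) = d := by field_simp
    rw [this, e2pi_int, sub_self, zero_div]

lemma nrm2_nonneg (x : ℝ × ℝ) : 0 ≤ nrm2 x := Real.sqrt_nonneg _

lemma nrm2_sq (x : ℝ × ℝ) : nrm2 x ^ 2 = x.1 ^ 2 + x.2 ^ 2 := Real.sq_sqrt (by positivity)

lemma nrm2_le_add_abs (x : ℝ × ℝ) : nrm2 x ≤ |x.1| + |x.2| := by
  refine Real.sqrt_le_iff.2 ⟨by positivity, ?_⟩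
  have := mul_nonneg (abs_nonneg x.1) (abs_nonneg x.2)
  nlinarith [sq_abs x.1, sq_abs x.2]

lemma abs_fst_le_nrm2 (x : ℝ × ℝ) : |x.1| ≤ nrm2 x :=
  Real.abs_le_sqrt (by nlinarith [sq_nonneg x.2])

lemma abs_snd_le_nrm2 (x : ℝ × ℝ) : |x.2| ≤ nrm2 x :=
  Real.abs_le_sqrt (by nlinarith [sq_nonneg x.1])

lemma abs_dot2_le (x y : ℝ × ℝ) : |dot2 x y| ≤ nrm2 x * nrm2 y := by
  rw [nrm2, nrm2, ← Real.sqrt_mul (by positivity)]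
  refine Real.abs_le_sqrt ?_
  rw [dot2]
  nlinarith [sq_nonneg (x.1 * y.2 - x.2 * y.1)]

lemma nrm2_add_le (x y : ℝ × ℝ) : nrm2 (x + y) ≤ nrm2 x + nrm2 y := by
  refine Real.sqrt_le_iff.2 ⟨add_nonneg (nrm2_nonneg _) (nrm2_nonneg _), ?_⟩
  have h1 := le_abs_self (dot2 x y)
  have h2 := abs_dot2_le x y
  have h3 := nrm2_sq x
  have h4 := nrm2_sq y
  rw [dot2] at h1 h2
  simp only [Prod.fst_add, Prod.snd_add]
  nlinarith

lemma nrm2_smul (t : ℝ) (x : ℝ × ℝ) : nrm2 (t • x) = |t| * nrm2 x := by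
  rw [nrm2, nrm2, ← Real.sqrt_sq_eq_abs, ← Real.sqrt_mul (by positivity)]
  simp only [Prod.smul_fst, Prod.smul_snd, smul_eq_mul]
  congr 1
  ring

lemma Mnorm_le (T : ℝ) (hT : 0 < T) (w x : ℝ × ℝ) :
    Mnorm (T ^ 2) w x ≤ nrm2 x / T + T ^ 2 * |dot2 w (perp2 x)| := by
  refine Real.sqrt_le_iff.2 ⟨by have := nrm2_nonneg x; positivity, ?_⟩
  have h := nrm2_sq x
  have h1 : x.1 ^ 2 / T ^ 2 + x.2 ^ 2 / T ^ 2 = (nrm2 x / T) ^ 2 := by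
    rw [div_pow, h]
    ring
  have h2 : (w.1 * x.2 - w.2 * x.1) ^ 2 = |dot2 w (perp2 x)| ^ 2 := by
    rw [sq_abs, dot2, perp2]
    ring
  rw [h1, h2]
  have := nrm2_nonneg x
  have : 0 ≤ (nrm2 x / T) * (T ^ 2 * |dot2 w (perp2 x)|) := by positivity
  nlinarith

/-- A nonzero dual lattice vector stays far from the segment spanned by the frequency `T³ w`. -/
lemma le_one_add_nrm2_dual (T X : ℝ) (hT : 0 < T) (q : ℕ) (hq : 1 ≤ q) (a : ℤ × ℤ) (w : ℝ × ℝ)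
    (hmu : X * (q * (T ^ 2)⁻¹ + nrm2 w * q * T) ≤ muM (T ^ 2) w a q)
    (l : ℤ × ℤ) (hl : l ∈ Lambda a q) (hl0 : l ≠ 0) (s : ℝ) (hs : |s| ≤ 1) :
    X ≤ 1 + nrm2 ((T / q) • ((l.1 : ℝ), (l.2 : ℝ)) + (s * T ^ 3) • w) := by
  have hq' : (0 : ℝ) < q := by exact_mod_cast hq
  set D := nrm2 ((T / q) • ((l.1 : ℝ), (l.2 : ℝ)) + (s * T ^ 3) • w) with hD
  set v : ℝ × ℝ := ((l.1 : ℝ), (l.2 : ℝ)) with hv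
  have hD0 : 0 ≤ D := nrm2_nonneg _
  have hw0 := nrm2_nonneg w
  have h1 : nrm2 v ≤ (q / T) * (D + T ^ 3 * nrm2 w) := by
    have e : (T / q) • v = ((T / q) • v + (s * T ^ 3) • w) + (-(s * T ^ 3)) • w := by
      rw [neg_smul, add_neg_cancel_right]
    have e2 := congrArg nrm2 e
    have e3 := nrm2_add_le ((T / q) • v + (s * T ^ 3) • w) ((-(s * T ^ 3)) • w)
    rw [← e2, nrm2_smul, nrm2_smul, abs_neg, abs_mul, abs_of_pos (by positivity : 0 < T / q),
      abs_of_pos (by positivity : 0 < T ^ 3)] at e3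
    have e4 : |s| * T ^ 3 * nrm2 w ≤ T ^ 3 * nrm2 w := by
      have : 0 ≤ T ^ 3 * nrm2 w := by positivity
      nlinarith
    have e5 : nrm2 v = (q / T) * (T / q * nrm2 v) := by field_simp
    rw [e5]
    gcongr
    linarith
  have h2 : |dot2 w (perp2 v)| ≤ (q / T) * (nrm2 w * D) := by
    have e : dot2 w (perp2 v) =
        (q / T) * dot2 w (perp2 ((T / q) • v + (s * T ^ 3) • w)) := by
      simp only [dot2, perp2, Prod.smul_fst, Prod.smul_snd, smul_eq_mul, Prod.fst_add,
        Prod.snd_add]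
      field_simp
      ring
    have hp : ∀ x : ℝ × ℝ, nrm2 (perp2 x) = nrm2 x := by
      intro x
      simp only [nrm2, perp2]
      congr 1
      ring
    rw [e, abs_mul, abs_of_pos (by positivity : 0 < (q : ℝ) / T)]
    gcongr
    refine (abs_dot2_le _ _).trans ?_
    rw [hp]
  have h3 := (muM_le (T ^ 2) w a q l hl hl0).trans (Mnorm_le T hT w v)
  have h4 : nrm2 v / T + T ^ 2 * |dot2 w (perp2 v)| ≤
      (1 + D) * (q * (T ^ 2)⁻¹ + nrm2 w * q * T) := by
    calc nrm2 v / T + T ^ 2 * |dot2 w (perp2 v)|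
        ≤ ((q / T) * (D + T ^ 3 * nrm2 w)) / T + T ^ 2 * ((q / T) * (nrm2 w * D)) := by gcongr
      _ = D * (q * (T ^ 2)⁻¹) + (1 + D) * (nrm2 w * q * T) := by
        field_simp
        ring
      _ ≤ _ := by
        have : 0 ≤ (q : ℝ) * (T ^ 2)⁻¹ := by positivity
        nlinarith
  refine le_of_mul_le_mul_right (hmu.trans (h3.trans h4)) ?_
  positivity

lemma hasDerivAt_integral_pow_mul (f : ℝ → ℝ) (hf : ContDiff ℝ (⊤ : ℕ∞) f) (k : ℕ) (x : ℝ) :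
    HasDerivAt (fun x => ∫ t in (0 : ℝ)..1, t ^ k * f (t * x))
      (∫ t in (0 : ℝ)..1, t ^ (k + 1) * deriv f (t * x)) x := by
  have hf' : Continuous (deriv f) := hf.continuous_deriv (by simp)
  have hcont := hf.continuous
  have hF' : Continuous fun z : ℝ × ℝ => z.2 ^ (k + 1) * deriv f (z.2 * z.1) := by fun_prop
  obtain ⟨K, hK⟩ := (((isCompact_closedBall x 1).prod
    (isCompact_Icc (a := (0 : ℝ)) (b := 1))).image hF').isBounded.exists_norm_le
  refine (intervalIntegral.hasDerivAt_integral_of_dominated_loc_of_deriv_le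
    (F := fun x t => t ^ k * f (t * x)) (F' := fun x t => t ^ (k + 1) * deriv f (t * x))
    (bound := fun _ => K) (Metric.closedBall_mem_nhds x one_pos)
    (Filter.Eventually.of_forall fun y => Continuous.aestronglyMeasurable (by fun_prop))
    (Continuous.intervalIntegrable (by fun_prop) _ _)
    (Continuous.aestronglyMeasurable (by fun_prop)) ?_
    intervalIntegrable_const ?_).2
  · refine Filter.Eventually.of_forall fun t ht y hy => ?_
    rw [Set.uIoc_of_le zero_le_one] at ht
    exact hK _ ⟨(y, t), ⟨hy, ht.1.le, ht.2⟩, rfl⟩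
  · refine Filter.Eventually.of_forall fun t _ y _ => ?_
    have h1 : HasDerivAt f (deriv f (t * y)) (t * y) :=
      ((hf.differentiable (by simp)) _).hasDerivAt
    have h2 := (h1.comp y ((hasDerivAt_id y).const_mul t)).const_mul (t ^ k)
    refine h2.congr_deriv ?_
    ring

lemma contDiff_integral_pow_mul (n k : ℕ) (f : ℝ → ℝ) (hf : ContDiff ℝ (⊤ : ℕ∞) f) :
    ContDiff ℝ n fun x => ∫ t in (0 : ℝ)..1, t ^ k * f (t * x) := by
  induction n generalizing k f with
  | zero =>
    rw [Nat.cast_zero, contDiff_zero]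
    exact continuous_iff_continuousAt.2 fun x =>
      (hasDerivAt_integral_pow_mul f hf k x).continuousAt
  | succ n ih =>
    rw [Nat.cast_add, Nat.cast_one, contDiff_succ_iff_deriv]
    refine ⟨fun x => (hasDerivAt_integral_pow_mul f hf k x).differentiableAt, by simp, ?_⟩
    have : (deriv fun x => ∫ t in (0 : ℝ)..1, t ^ k * f (t * x)) =
        fun x => ∫ t in (0 : ℝ)..1, t ^ (k + 1) * deriv f (t * x) :=
      funext fun x => (hasDerivAt_integral_pow_mul f hf k x).deriv
    rw [this]
    exact ih (k + 1) (deriv f) (contDiff_infty_iff_deriv.1 hf).2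

/-- The derivative of an even smooth function is `x` times an even smooth function. -/
lemma exists_deriv_eq_mul_of_even (f : ℝ → ℝ) (hf : ContDiff ℝ (⊤ : ℕ∞) f)
    (he : ∀ x, f (-x) = f x) :
    ∃ g : ℝ → ℝ, ContDiff ℝ (⊤ : ℕ∞) g ∧ (∀ x, g (-x) = g x) ∧ ∀ x, deriv f x = x * g x := by
  have hf1 : ContDiff ℝ (⊤ : ℕ∞) (deriv f) := (contDiff_infty_iff_deriv.1 hf).2
  have hf2 : ContDiff ℝ (⊤ : ℕ∞) (deriv (deriv f)) := (contDiff_infty_iff_deriv.1 hf1).2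
  have h1 : ∀ x, deriv f (-x) = -deriv f x := by
    intro x
    have := deriv_comp_neg f x
    rw [funext he] at this
    linarith
  have h2 : ∀ x, deriv (deriv f) (-x) = deriv (deriv f) x := by
    intro x
    have := deriv_comp_neg (deriv f) x
    rw [funext h1, deriv.fun_neg] at this
    linarith
  refine ⟨fun x => ∫ t in (0 : ℝ)..1, deriv (deriv f) (t * x), ?_, ?_, ?_⟩
  · rw [contDiff_infty]
    intro n
    simpa using contDiff_integral_pow_mul n 0 _ hf2
  · intro x
    simp only [mul_neg, h2]
  · intro x
    have h0 : deriv f 0 = 0 := by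
      have := h1 0
      rw [neg_zero] at this
      linarith
    have hcont := hf2.continuous
    have := intervalIntegral.integral_eq_sub_of_hasDerivAt (a := 0) (b := 1)
      (f := fun t => deriv f (t * x)) (f' := fun t => x * deriv (deriv f) (t * x))
      (fun t _ => by
        have h3 : HasDerivAt (deriv f) (deriv (deriv f) (t * x)) (t * x) :=
          ((hf1.differentiable (by simp)) _).hasDerivAt
        refine (h3.comp t ((hasDerivAt_id t).mul_const x)).congr_deriv ?_
        ring)
      (Continuous.intervalIntegrable (by fun_prop) _ _)
    rw [intervalIntegral.integral_const_mul] at this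
    simpa [h0] using this.symm

lemma hasFDerivAt_nrm2_sq (x : ℝ × ℝ) :
    HasFDerivAt (fun x : ℝ × ℝ => x.1 ^ 2 + x.2 ^ 2)
      ((2 * x.1) • ContinuousLinearMap.fst ℝ ℝ ℝ + (2 * x.2) • ContinuousLinearMap.snd ℝ ℝ ℝ)
      x := by
  have h1 := (hasFDerivAt_fst (𝕜 := ℝ) (p := x)).pow 2
  have h2 := (hasFDerivAt_snd (𝕜 := ℝ) (p := x)).pow 2
  refine (h1.add h2).congr_fderiv ?_
  simp

lemma nrm2_pos {x : ℝ × ℝ} (hx : x ≠ 0) : 0 < nrm2 x := by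
  refine Real.sqrt_pos.2 ?_
  by_contra! h
  refine hx (Prod.ext ?_ ?_)
  · exact pow_eq_zero_iff two_ne_zero |>.1 (by nlinarith [sq_nonneg x.1, sq_nonneg x.2])
  · exact pow_eq_zero_iff two_ne_zero |>.1 (by nlinarith [sq_nonneg x.1, sq_nonneg x.2])

lemma continuous_nrm2 : Continuous nrm2 := by
  unfold nrm2
  fun_prop

lemma contDiffAt_nrm2 {x : ℝ × ℝ} (hx : x ≠ 0) : ContDiffAt ℝ (⊤ : ℕ∞) nrm2 x := by
  refine ContDiffAt.sqrt (by fun_prop) ?_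
  rw [← nrm2_sq]
  exact (pow_pos (nrm2_pos hx) 2).ne'

lemma nrm2_zero : nrm2 0 = 0 := by simp [nrm2]

lemma hasFDerivAt_comp_nrm2 (f g : ℝ → ℝ) (hf : Differentiable ℝ f)
    (hfg : ∀ x, deriv f x = x * g x) (x : ℝ × ℝ) :
    HasFDerivAt (fun x => f (nrm2 x)) (g (nrm2 x) •
      (x.1 • ContinuousLinearMap.fst ℝ ℝ ℝ + x.2 • ContinuousLinearMap.snd ℝ ℝ ℝ)) x := by
  by_cases hx : x = 0
  · subst hx
    have h0 : HasDerivAt f 0 (nrm2 0) := by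
      refine (hf (nrm2 0)).hasDerivAt.congr_deriv ?_
      rw [hfg, nrm2_zero, zero_mul]
    have h1 := (hasDerivAt_iff_isLittleO.1 h0).comp_tendsto
      (continuous_nrm2.tendsto (0 : ℝ × ℝ))
    rw [hasFDerivAt_iff_isLittleO]
    refine Asymptotics.IsLittleO.congr_left (h1.trans_isBigO (k := fun x : ℝ × ℝ => x - 0) ?_) ?_
    · refine Asymptotics.IsBigO.of_bound 2 (Filter.Eventually.of_forall fun x => ?_)
      simp only [Function.comp, nrm2_zero, sub_zero]
      rw [Real.norm_eq_abs, abs_of_nonneg (nrm2_nonneg x)]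
      refine (nrm2_le_add_abs x).trans ?_
      have h1 := norm_fst_le x
      have h2 := norm_snd_le x
      rw [Real.norm_eq_abs] at h1 h2
      linarith
    · intro x
      simp
  · have h1 := (hasFDerivAt_nrm2_sq x).sqrt (by
      rw [← nrm2_sq]
      exact (pow_pos (nrm2_pos hx) 2).ne')
    have h2 := (hf (nrm2 x)).hasDerivAt.comp_hasFDerivAt x h1
    refine h2.congr_fderiv ?_
    change deriv f (nrm2 x) • (1 / (2 * nrm2 x)) • _ = _
    have := (nrm2_pos hx).ne'
    rw [hfg]
    ext <;> simp <;> field_simp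

/-- An even smooth function of the Euclidean norm is smooth. -/
theorem contDiff_comp_nrm2_of_even (f : ℝ → ℝ) (hf : ContDiff ℝ (⊤ : ℕ∞) f)
    (he : ∀ x, f (-x) = f x) : ContDiff ℝ (⊤ : ℕ∞) fun x => f (nrm2 x) := by
  rw [contDiff_infty]
  intro n
  induction n generalizing f with
  | zero =>
    rw [Nat.cast_zero, contDiff_zero]
    exact hf.continuous.comp continuous_nrm2
  | succ n ih =>
    obtain ⟨g, hg, hge, hfg⟩ := exists_deriv_eq_mul_of_even f hf he
    rw [Nat.cast_add, Nat.cast_one, contDiff_succ_iff_hasFDerivAt]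
    refine ⟨_, ?_, hasFDerivAt_comp_nrm2 f g (hf.differentiable (by simp)) hfg⟩
    exact (ih g hg hge).smul (by fun_prop)

/-- A smooth function on `ℝ × ℝ` vanishing for small second argument stays smooth after the
second argument is replaced by the Euclidean norm. -/
lemma contDiff_comp_nrm2_of_vanishing (F : ℝ × ℝ → ℂ) (hF : ContDiff ℝ (⊤ : ℕ∞) F) (ε : ℝ)
    (hε : 0 < ε) (h0 : ∀ s t, t < ε → F (s, t) = 0) :
    ContDiff ℝ (⊤ : ℕ∞) fun z : ℝ × (ℝ × ℝ) => F (z.1, nrm2 z.2) := by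
  rw [contDiff_iff_contDiffAt]
  rintro ⟨s, x⟩
  by_cases hx : x = 0
  · subst hx
    refine (contDiffAt_const (c := (0 : ℂ))).congr_of_eventuallyEq ?_
    have hc : Continuous fun z : ℝ × (ℝ × ℝ) => nrm2 z.2 := continuous_nrm2.comp continuous_snd
    have : ∀ᶠ z : ℝ × (ℝ × ℝ) in nhds (s, 0), nrm2 z.2 < ε := by
      refine hc.continuousAt.eventually_lt_const ?_
      simpa [nrm2_zero] using hε
    filter_upwards [this] with z hz
    exact h0 _ _ hz
  · refine hF.contDiffAt.comp (s, x) (contDiffAt_fst.prodMk ?_)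
    exact ContDiffAt.comp (g := nrm2) (s, x) (contDiffAt_nrm2 hx) contDiffAt_snd

lemma finite_int_smul_mem (K : Set (ℝ × ℝ)) (hK : IsCompact K) (h : ℝ) (hh : 0 < h) :
    {r : ℤ × ℤ | (h * (r.1 : ℝ), h * (r.2 : ℝ)) ∈ K}.Finite := by
  obtain ⟨R, hR⟩ := hK.isBounded.exists_norm_le
  refine ((Set.finite_Icc (-⌈R / h⌉) ⌈R / h⌉).prod (Set.finite_Icc (-⌈R / h⌉) ⌈R / h⌉)).subset ?_
  intro r hr
  have h1 := hR _ hr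
  have key : ∀ n : ℤ, |h * n| ≤ R → n ∈ Set.Icc (-⌈R / h⌉) ⌈R / h⌉ := by
    intro n hn
    rw [abs_mul, abs_of_pos hh, mul_comm, ← le_div_iff₀ hh] at hn
    have h2 := hn.trans (Int.le_ceil (R / h))
    have h3 : |n| ≤ ⌈R / h⌉ := by exact_mod_cast h2
    exact abs_le.1 h3
  exact ⟨key _ ((norm_fst_le _).trans h1), key _ ((norm_snd_le _).trans h1)⟩

lemma summable_comp_int_smul_mul (g : ℝ × ℝ → ℂ) (hgc : HasCompactSupport g) (h : ℝ)
    (hh : 0 < h) (f : ℤ × ℤ → ℂ) :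
    Summable fun r : ℤ × ℤ => g (h * r.1, h * r.2) * f r := by
  refine summable_of_hasFiniteSupport ((finite_int_smul_mem _ hgc.isCompact h hh).subset ?_)
  intro r hr
  exact subset_tsupport _ (left_ne_zero_of_mul hr)

lemma dual_vector_mem_Lambda (a : ℤ × ℤ) (q m : ℕ) (n : ℤ × ℤ) :
    ((m : ℤ) * a.1 + q * n.2, (m : ℤ) * a.2 - q * n.1) ∈ Lambda a q :=
  ⟨m, (n.2, -n.1), by simp [sub_eq_add_neg]⟩

lemma dual_vector_ne_zero (a : ℤ × ℤ) (q m : ℕ) (hgcd : Nat.gcd (Int.gcd a.1 a.2) q = 1)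
    (hm : m < q) (n : ℤ × ℤ) (h : ¬(m = 0 ∧ n = 0)) :
    ((m : ℤ) * a.1 + q * n.2, (m : ℤ) * a.2 - q * n.1) ≠ 0 := by
  intro h0
  rw [Prod.ext_iff] at h0
  obtain ⟨h1, h2⟩ := h0
  simp only [Prod.fst_zero, Prod.snd_zero] at h1 h2
  have d1 : (q : ℤ) ∣ m * a.1 := ⟨-n.2, by linarith⟩
  have d2 : (q : ℤ) ∣ m * a.2 := ⟨n.1, by linarith⟩
  have d3 : (q : ℤ) ∣ (m : ℤ) * (Int.gcd a.1 a.2 : ℤ) := by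
    rw [Int.gcd_eq_gcd_ab, mul_add, ← mul_assoc, ← mul_assoc]
    exact dvd_add (d1.mul_right _) (d2.mul_right _)
  have d4 : q ∣ m * Int.gcd a.1 a.2 := by exact_mod_cast d3
  have d5 : q ∣ m := Nat.Coprime.dvd_of_dvd_mul_right (Nat.Coprime.symm hgcd) d4
  have m0 : m = 0 := Nat.eq_zero_of_dvd_of_lt d5 hm
  have hq0 : (q : ℤ) ≠ 0 := by omega
  refine h ⟨m0, Prod.ext ?_ ?_⟩
  · subst m0
    simpa [Int.natCast_ne_zero.1 hq0] using h2
  · subst m0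
    simpa [Int.natCast_ne_zero.1 hq0] using h1

/-- Poisson summation over the lattice `Λ(a,q)` with all dual frequencies but one negligible. -/
theorem norm_sum_Lambda_sub_integral_le (g : ℝ × ℝ → ℂ) (hg : ContDiff ℝ (⊤ : ℕ∞) g)
    (hgc : HasCompactSupport g) (K : ℝ) (N : ℕ)
    (hdec : ∀ ξ η : ℝ, ‖∫ x : ℝ × ℝ, g x * e2pi (-(x.1 * ξ + x.2 * η))‖ ≤
      K / ((1 + |ξ|) ^ (N + 2) * (1 + |η|) ^ (N + 2)))
    (T X : ℝ) (hT : 1 ≤ T) (hX : 0 < X) (q : ℕ) (hq : 1 ≤ q) (a : ℤ × ℤ)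
    (hgcd : Nat.gcd (Int.gcd a.1 a.2) q = 1) (w : ℝ × ℝ)
    (hmu : X * (q * (T ^ 2)⁻¹ + nrm2 w * q * T) ≤ muM (T ^ 2) w a q)
    (s : ℝ) (hs : |s| ≤ 1) :
    ‖∑' r : ℤ × ℤ, (Lambda a q).indicator (fun r => g (T⁻¹ * r.1, T⁻¹ * r.2) *
        e2pi (-(s * dot2 (T ^ 3 • w) (perp2 (T⁻¹ * r.1, T⁻¹ * r.2))))) r -
      (T ^ 2 / q : ℝ) * ∫ x : ℝ × ℝ, g x * e2pi (-(s * dot2 (T ^ 3 • w) (perp2 x)))‖ ≤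
      K * (4 * ∑' n : ℤ, 1 / (1 + |(n : ℝ)|) ^ 2) ^ 2 * T ^ 2 / X ^ N := by
  have hT0 : 0 < T := by linarith
  have hTi : T⁻¹ ≤ 1 := inv_le_one_of_one_le₀ hT
  have hTi0 : 0 < T⁻¹ := by positivity
  have hq0 : (0 : ℝ) < q := by exact_mod_cast hq
  have hqc : (q : ℂ) ≠ 0 := by exact_mod_cast hq0.ne'
  have hK : 0 ≤ K := by simpa using (norm_nonneg _).trans (hdec 0 0)
  set S := 4 * ∑' n : ℤ, 1 / (1 + |(n : ℝ)|) ^ 2 with hS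
  set b : ℝ × ℝ → ℝ := fun x => dot2 (T ^ 3 • w) (perp2 x) with hb
  set θ₁ : ℕ → ℝ := fun m => -(s * T⁻¹ * T ^ 3 * w.2) - m * a.2 / q with hθ₁
  set θ₂ : ℕ → ℝ := fun m => s * T⁻¹ * T ^ 3 * w.1 + m * a.1 / q with hθ₂
  set c : ℕ → ℤ × ℤ → ℂ := fun m n => ∫ x : ℝ × ℝ, g x *
    e2pi (-(x.1 * ((n.1 + θ₁ m) / T⁻¹) + x.2 * ((n.2 + θ₂ m) / T⁻¹))) with hc
  have hmain : ∫ x : ℝ × ℝ, g x * e2pi (-(s * b x)) = c 0 0 := by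
    rw [hc]
    congr 1
    ext x
    congr 2
    simp only [hb, hθ₁, hθ₂, dot2, perp2, Prod.smul_fst, Prod.smul_snd, smul_eq_mul,
      Prod.fst_zero, Prod.snd_zero]
    push_cast
    field_simp
    ring
  have hsum : ∑' r : ℤ × ℤ, (Lambda a q).indicator (fun r => g (T⁻¹ * r.1, T⁻¹ * r.2) *
      e2pi (-(s * b (T⁻¹ * r.1, T⁻¹ * r.2)))) r =
      (q : ℂ)⁻¹ * ∑ m ∈ Finset.range q, (T : ℂ) ^ 2 * ∑' n, c m n := by
    have h1 : ∀ m, (T : ℂ) ^ 2 * ∑' n, c m n = ∑' r : ℤ × ℤ, g (T⁻¹ * r.1, T⁻¹ * r.2) *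
        e2pi (-(r.1 * θ₁ m + r.2 * θ₂ m)) := by
      intro m
      rw [poisson_plane_scaled g hg hgc T⁻¹ (θ₁ m) (θ₂ m) hTi0, inv_pow, inv_inv]
      push_cast
      rfl
    simp only [h1]
    rw [← Summable.tsum_finsetSum
      fun m _ => summable_comp_int_smul_mul g hgc T⁻¹ hTi0 _, ← tsum_mul_left]
    congr 1
    ext r
    have h2 : ∀ m : ℕ, g (T⁻¹ * r.1, T⁻¹ * r.2) * e2pi (-(r.1 * θ₁ m + r.2 * θ₂ m)) =
        g (T⁻¹ * r.1, T⁻¹ * r.2) * e2pi (-(s * b (T⁻¹ * r.1, T⁻¹ * r.2))) *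
          e2pi (m * (((r.1 * a.2 - r.2 * a.1 : ℤ) : ℝ) / q)) := by
      intro m
      rw [mul_assoc, ← e2pi_add]
      congr 2
      simp only [hb, hθ₁, hθ₂, dot2, perp2, Prod.smul_fst, Prod.smul_snd, smul_eq_mul]
      push_cast
      ring
    simp only [h2]
    rw [← Finset.mul_sum, sum_e2pi_mul_div q hq]
    by_cases hr : r ∈ Lambda a q
    · rw [Set.indicator_of_mem hr, if_pos ((mem_Lambda_iff a q hgcd r).1 hr)]
      field_simp
    · rw [Set.indicator_of_notMem hr, if_neg (mt (mem_Lambda_iff a q hgcd r).2 hr)]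
      simp
  have hdom : ∀ m, Summable fun n : ℤ × ℤ => (1 / (1 + |((n.1 : ℝ) + θ₁ m) / T⁻¹|) ^ 2) *
      (1 / (1 + |((n.2 : ℝ) + θ₂ m) / T⁻¹|) ^ 2) := fun m =>
    (summable_shift T⁻¹ (θ₁ m) hTi0 hTi).mul_of_nonneg (summable_shift T⁻¹ (θ₂ m) hTi0 hTi)
      (fun n => by positivity) (fun n => by positivity)
  have hdomle : ∀ m, ∑' n : ℤ × ℤ, (1 / (1 + |((n.1 : ℝ) + θ₁ m) / T⁻¹|) ^ 2) *
      (1 / (1 + |((n.2 : ℝ) + θ₂ m) / T⁻¹|) ^ 2) ≤ S ^ 2 := by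
    intro m
    rw [← (summable_shift T⁻¹ (θ₁ m) hTi0 hTi).tsum_mul_tsum (summable_shift T⁻¹ (θ₂ m) hTi0 hTi)
      (hdom m), sq]
    have h1 := tsum_shift_le T⁻¹ (θ₁ m) hTi0 hTi
    have h2 := tsum_shift_le T⁻¹ (θ₂ m) hTi0 hTi
    exact mul_le_mul h1 h2 (tsum_nonneg fun n => by positivity)
      ((tsum_nonneg fun n => by positivity).trans h1)
  have hcsum : ∀ m, Summable (c m) := by
    intro m
    refine Summable.of_norm_bounded ((hdom m).mul_left K) fun n => ?_
    refine (hdec _ _).trans ?_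
    rw [div_mul_div_comm, one_mul, mul_one_div]
    gcongr
    · exact le_add_of_nonneg_right (abs_nonneg _)
    · omega
    · exact le_add_of_nonneg_right (abs_nonneg _)
    · omega
  have hcle : ∀ m n, m < q → ¬(m = 0 ∧ n = 0) → ‖c m n‖ ≤ K / X ^ N *
      ((1 / (1 + |((n.1 : ℝ) + θ₁ m) / T⁻¹|) ^ 2) *
        (1 / (1 + |((n.2 : ℝ) + θ₂ m) / T⁻¹|) ^ 2)) := by
    intro m n hm hmn
    have h1 := le_one_add_nrm2_dual T X hT0 q hq a w hmu _ (dual_vector_mem_Lambda a q m n)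
      (dual_vector_ne_zero a q m hgcd hm n hmn) s hs
    have h2 := h1.trans (add_le_add_right (nrm2_le_add_abs _) 1)
    have e1 : |(T / q) * ((m * a.1 + q * n.2 : ℤ) : ℝ) + s * T ^ 3 * w.1| =
        |((n.2 : ℝ) + θ₂ m) / T⁻¹| := by
      congr 1
      simp only [hθ₂]
      push_cast
      field_simp
      ring
    have e2 : |(T / q) * ((m * a.2 - q * n.1 : ℤ) : ℝ) + s * T ^ 3 * w.2| =
        |((n.1 : ℝ) + θ₁ m) / T⁻¹| := by
      rw [← abs_neg]
      congr 1
      simp only [hθ₁]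
      push_cast
      field_simp
      ring
    simp only [Prod.fst_add, Prod.snd_add, Prod.smul_fst, Prod.smul_snd, smul_eq_mul] at h2
    rw [e1, e2] at h2
    refine (hdec _ _).trans ?_
    set u := |((n.1 : ℝ) + θ₁ m) / T⁻¹|
    set v := |((n.2 : ℝ) + θ₂ m) / T⁻¹|
    have hu : 0 ≤ u := abs_nonneg _
    have hv : 0 ≤ v := abs_nonneg _
    have h3 : X ≤ (1 + u) * (1 + v) := by nlinarith [mul_nonneg hu hv]
    rw [div_mul_div_comm, one_mul, div_mul_div_comm, mul_one]
    refine div_le_div_of_nonneg_left hK (by positivity) ?_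
    calc X ^ N * ((1 + u) ^ 2 * (1 + v) ^ 2)
        ≤ ((1 + u) * (1 + v)) ^ N * ((1 + u) ^ 2 * (1 + v) ^ 2) := by gcongr
      _ = _ := by
        rw [mul_pow]
        ring
  have hm : ∀ m ∈ Finset.range q, ‖∑' n, c m n - (if m = 0 then c 0 0 else 0)‖ ≤
      K / X ^ N * S ^ 2 := by
    intro m hm
    rw [Finset.mem_range] at hm
    have h1 : ∑' n, c m n - (if m = 0 then c 0 0 else 0) =
        ∑' n, if m = 0 ∧ n = 0 then 0 else c m n := by
      split_ifs with h0
      · subst h0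
        rw [(hcsum 0).tsum_eq_add_tsum_ite 0, add_sub_cancel_left]
        simp
      · simp [h0]
    rw [h1]
    refine (tsum_of_norm_bounded ((hdom m).mul_left (K / X ^ N)).hasSum fun n => ?_).trans ?_
    · split_ifs with h0
      · rw [norm_zero]
        positivity
      · exact hcle m n hm h0
    · rw [tsum_mul_left]
      gcongr
      exact hdomle m
  have hfin : (T ^ 2 / q : ℝ) * c 0 0 = (q : ℂ)⁻¹ *
      ∑ m ∈ Finset.range q, (T : ℂ) ^ 2 * (if m = 0 then c 0 0 else 0) := by
    rw [← Finset.mul_sum, Finset.sum_ite_eq' (Finset.range q) 0 (fun _ => c 0 0),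
      if_pos (Finset.mem_range.2 hq)]
    push_cast
    ring
  rw [hsum, hmain, hfin, ← mul_sub, ← Finset.sum_sub_distrib, norm_mul]
  simp only [← mul_sub]
  have h5 : ‖∑ m ∈ Finset.range q, (T : ℂ) ^ 2 * (∑' n, c m n - if m = 0 then c 0 0 else 0)‖ ≤
      ∑ m ∈ Finset.range q, T ^ 2 * (K / X ^ N * S ^ 2) := by
    refine norm_sum_le_of_le _ fun m h => ?_
    rw [norm_mul, norm_pow, Complex.norm_real, Real.norm_eq_abs, abs_of_pos hT0]
    gcongr
    exact hm m h
  rw [norm_inv, Complex.norm_natCast]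
  refine (mul_le_mul_of_nonneg_left h5 (by positivity)).trans (le_of_eq ?_)
  rw [Finset.sum_const, Finset.card_range, nsmul_eq_mul]
  field_simp

/-- The lattice sum of `τ ↦ ∫ G(s,τ) e(-s b(τ)) ds` is close to its integral. -/
theorem exists_norm_sum_Lambda_marginal_le (G : ℝ × (ℝ × ℝ) → ℂ) (hG : ContDiff ℝ (⊤ : ℕ∞) G)
    (hGc : HasCompactSupport G) (hG1 : ∀ s x, 1 < |s| → G (s, x) = 0) (N : ℕ) :
    ∃ C : ℝ, 0 ≤ C ∧ ∀ T X : ℝ, 1 ≤ T → 0 < X → ∀ q : ℕ, 1 ≤ q → ∀ a : ℤ × ℤ,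
      Nat.gcd (Int.gcd a.1 a.2) q = 1 → ∀ w : ℝ × ℝ,
      X * (q * (T ^ 2)⁻¹ + nrm2 w * q * T) ≤ muM (T ^ 2) w a q →
      ‖∑' r : ℤ × ℤ, (Lambda a q).indicator (fun r => ∫ s, G (s, (T⁻¹ * r.1, T⁻¹ * r.2)) *
          e2pi (-(s * dot2 (T ^ 3 • w) (perp2 (T⁻¹ * r.1, T⁻¹ * r.2))))) r -
        (T ^ 2 / q : ℝ) *
          ∫ x : ℝ × ℝ, ∫ s, G (s, x) * e2pi (-(s * dot2 (T ^ 3 • w) (perp2 x)))‖ ≤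
        C * T ^ 2 / X ^ N := by
  obtain ⟨K, hK, hdec⟩ := exists_fourier_decay_plane G hG hGc (N + 2)
  refine ⟨2 * (K * (4 * ∑' n : ℤ, 1 / (1 + |(n : ℝ)|) ^ 2) ^ 2), by positivity,
    fun T X hT hX q hq a hgcd w hmu => ?_⟩
  have hT0 : 0 < T := by linarith
  have hTi0 : 0 < T⁻¹ := by positivity
  set b : ℝ × ℝ → ℝ := fun x => dot2 (T ^ 3 • w) (perp2 x) with hb
  have hbc : Continuous b := by
    simp only [hb, dot2, perp2]
    fun_prop
  have hGcont := hG.continuous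
  have he := continuous_e2pi
  have hcont : Continuous fun z : ℝ × (ℝ × ℝ) => G z * e2pi (-(z.1 * b z.2)) := by fun_prop
  have hint : Integrable (fun z : ℝ × (ℝ × ℝ) => G z * e2pi (-(z.1 * b z.2)))
      (volume.prod volume) := hcont.integrable_of_hasCompactSupport hGc.mul_right
  have hswap := integral_integral_swap (f := fun s x => G (s, x) * e2pi (-(s * b x))) hint
  have hfin := finite_int_smul_mem _ (hGc.isCompact.image continuous_snd) T⁻¹ hTi0
  have hzero : ∀ r : ℤ × ℤ, r ∉ hfin.toFinset → ∀ s,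
      G (s, (T⁻¹ * (r.1 : ℝ), T⁻¹ * (r.2 : ℝ))) = 0 := by
    intro r hr s
    by_contra h
    exact hr (hfin.mem_toFinset.2 ⟨_, subset_tsupport _ h, rfl⟩)
  have hslice : ∀ x : ℝ × ℝ, Integrable fun s => G (s, x) * e2pi (-(s * b x)) := by
    intro x
    refine Continuous.integrable_of_hasCompactSupport (by fun_prop) ?_
    refine HasCompactSupport.intro (isCompact_Icc (a := (-1 : ℝ)) (b := 1)) fun s hs => ?_
    rw [hG1 s x, zero_mul]
    by_contra! h
    exact hs (abs_le.1 h)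
  set A : ℝ → ℂ := fun s => ∑' r : ℤ × ℤ, (Lambda a q).indicator
    (fun r => G (s, (T⁻¹ * r.1, T⁻¹ * r.2)) * e2pi (-(s * b (T⁻¹ * r.1, T⁻¹ * r.2)))) r -
    (T ^ 2 / q : ℝ) * ∫ x : ℝ × ℝ, G (s, x) * e2pi (-(s * b x)) with hA
  have hAeq : ∑' r : ℤ × ℤ, (Lambda a q).indicator (fun r =>
      ∫ s, G (s, (T⁻¹ * r.1, T⁻¹ * r.2)) * e2pi (-(s * b (T⁻¹ * r.1, T⁻¹ * r.2)))) r -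
      (T ^ 2 / q : ℝ) * ∫ x : ℝ × ℝ, ∫ s, G (s, x) * e2pi (-(s * b x)) = ∫ s, A s := by
    have h1 : ∀ r : ℤ × ℤ, Integrable fun s => (Lambda a q).indicator (fun r : ℤ × ℤ =>
        G (s, (T⁻¹ * r.1, T⁻¹ * r.2)) * e2pi (-(s * b (T⁻¹ * r.1, T⁻¹ * r.2)))) r := by
      intro r
      by_cases hr : r ∈ Lambda a q
      · simpa only [Set.indicator_of_mem hr] using hslice _
      · simp only [Set.indicator_of_notMem hr]
        exact integrable_zero _ _ _
    have h2 : ∀ s, A s = ∑ r ∈ hfin.toFinset, (Lambda a q).indicator (fun r : ℤ × ℤ =>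
        G (s, (T⁻¹ * r.1, T⁻¹ * r.2)) * e2pi (-(s * b (T⁻¹ * r.1, T⁻¹ * r.2)))) r -
        (T ^ 2 / q : ℝ) * ∫ x : ℝ × ℝ, G (s, x) * e2pi (-(s * b x)) := by
      intro s
      rw [hA]
      dsimp only
      rw [tsum_eq_sum fun r hr => ?_]
      refine Set.indicator_apply_eq_zero.2 fun _ => ?_
      rw [hzero r hr, zero_mul]
    simp only [h2]
    rw [integral_sub (integrable_finsetSum _ fun r _ => h1 r)
      (hint.integral_prod_left.const_mul _), integral_finsetSum _ fun r _ => h1 r,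
      integral_const_mul, hswap, tsum_eq_sum (s := hfin.toFinset) fun r hr => ?_]
    · congr 1
      refine Finset.sum_congr rfl fun r _ => ?_
      by_cases hr : r ∈ Lambda a q
      · simp only [Set.indicator_of_mem hr]
      · simp only [Set.indicator_of_notMem hr, integral_zero]
    · refine Set.indicator_apply_eq_zero.2 fun _ => ?_
      simp only [hzero r hr, zero_mul, integral_zero]
  have hA0 : ∀ s, s ∉ Set.Icc (-1 : ℝ) 1 → A s = 0 := by
    intro s hs
    have h1 : ∀ x, G (s, x) = 0 := by
      intro x
      refine hG1 s x ?_
      by_contra! h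
      exact hs (abs_le.1 h)
    simp [hA, h1]
  rw [hAeq, ← setIntegral_eq_integral_of_forall_compl_eq_zero hA0]
  refine (norm_setIntegral_le_of_norm_le_const (C := K *
    (4 * ∑' n : ℤ, 1 / (1 + |(n : ℝ)|) ^ 2) ^ 2 * T ^ 2 / X ^ N) (by simp) fun s hs => ?_).trans ?_
  · exact norm_sum_Lambda_sub_integral_le (fun x => G (s, x))
      (hG.comp (contDiff_const.prodMk contDiff_id)) (hGc.slice_snd s) K N (hdec s) T X hT hX q hq
      a hgcd w hmu s (abs_le.2 hs)
  · refine le_of_eq ?_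
    rw [Measure.real, Real.volume_Icc, ENNReal.toReal_ofReal (by norm_num)]
    ring

lemma integral_dilate_mul_e2pi (f : ℝ → ℝ) (b t : ℝ) (ht : 0 < t) :
    ∫ s : ℝ, (f (s * t) : ℂ) * e2pi (-(s * b)) = (t⁻¹ : ℝ) * fourierW0 f (b / t) := by
  have h := Measure.integral_comp_mul_right
    (fun x : ℝ => (f x : ℂ) * e2pi (-(x * (b / t)))) t
  rw [abs_of_pos (inv_pos.2 ht)] at h
  rw [fourierW0, ← Complex.real_smul, ← h]
  congr 1
  ext s
  congr 3
  field_simp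

lemma HasCompactSupport.of_nrm2 (G : ℝ × (ℝ × ℝ) → ℂ) (h1 : ∀ s x, 1 < |s| → G (s, x) = 0)
    (h2 : ∀ s x, 1 < nrm2 x → G (s, x) = 0) : HasCompactSupport G := by
  refine HasCompactSupport.intro (isCompact_closedBall (0 : ℝ × (ℝ × ℝ)) 1) ?_
  rintro ⟨s, x⟩ hx
  by_contra h
  refine hx (mem_closedBall_zero_iff.2 (norm_prod_le_iff.2 ⟨?_, norm_prod_le_iff.2 ?_⟩))
  · exact not_lt.1 (mt (h1 s x) h)
  · have h3 := not_lt.1 (mt (h2 s x) h)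
    exact ⟨(abs_fst_le_nrm2 x).trans h3, (abs_snd_le_nrm2 x).trans h3⟩

/-- The main term `τ ↦ |τ|⁻¹ ω(|τ|) ω̂₀(b(τ)/|τ|)` summed over the rescaled lattice. -/
theorem exists_norm_sum_Lambda_main_le (ω : ℝ → ℝ) (hω : ContDiff ℝ (⊤ : ℕ∞) ω)
    (hω_supp : Function.support ω ⊆ Set.Ioo (1 / 2 : ℝ) 1)
    (ω₀ : ℝ → ℝ) (hω₀ : ContDiff ℝ (⊤ : ℕ∞) ω₀)
    (hω₀_supp : Function.support ω₀ ⊆ Set.Ioo (-(1 / 2) : ℝ) (1 / 2)) (N : ℕ) :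
    ∃ C : ℝ, 0 ≤ C ∧ ∀ T X : ℝ, 1 ≤ T → 0 < X → ∀ q : ℕ, 1 ≤ q → ∀ a : ℤ × ℤ,
      Nat.gcd (Int.gcd a.1 a.2) q = 1 → ∀ w : ℝ × ℝ,
      X * (q * (T ^ 2)⁻¹ + nrm2 w * q * T) ≤ muM (T ^ 2) w a q → ∀ H : ℝ × ℝ → ℂ,
      (∀ x, H x = ((nrm2 x)⁻¹ * ω (nrm2 x) : ℝ) *
        fourierW0 ω₀ (dot2 (T ^ 3 • w) (perp2 x) / nrm2 x)) →
      ‖∑' r : ℤ × ℤ, (Lambda a q).indicator (fun r => H (T⁻¹ * r.1, T⁻¹ * r.2)) r -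
        (T ^ 2 / q : ℝ) * ∫ x : ℝ × ℝ, H x‖ ≤ C * T ^ 2 / X ^ N := by
  have hω0 : ∀ t, t ≤ 1 / 2 → ω t = 0 := fun t ht => by
    by_contra h
    exact absurd (hω_supp h).1 (not_lt.2 ht)
  have hω1 : ∀ t, 1 ≤ t → ω t = 0 := fun t ht => by
    by_contra h
    exact absurd (hω_supp h).2 (not_lt.2 ht)
  set F : ℝ × ℝ → ℂ := fun z => ((ω z.2 * ω₀ (z.1 * z.2) : ℝ) : ℂ) with hF
  have hFs : ContDiff ℝ (⊤ : ℕ∞) F := Complex.ofRealCLM.contDiff.comp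
    ((hω.comp contDiff_snd).mul (hω₀.comp (contDiff_fst.mul contDiff_snd)))
  set G : ℝ × (ℝ × ℝ) → ℂ := fun z => F (z.1, nrm2 z.2) with hG
  have hGs : ContDiff ℝ (⊤ : ℕ∞) G := by
    refine contDiff_comp_nrm2_of_vanishing F hFs (1 / 2) (by norm_num) fun s t ht => ?_
    simp [hF, hω0 t ht.le]
  have hG1 : ∀ s x, 1 < |s| → G (s, x) = 0 := by
    intro s x hs
    by_contra h
    simp only [hG, hF, Complex.ofReal_eq_zero, mul_eq_zero, not_or] at h
    have h1 := (hω_supp h.1).1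
    have h2 := abs_lt.2 (hω₀_supp h.2)
    rw [abs_mul, abs_of_pos (by linarith : 0 < nrm2 x)] at h2
    nlinarith
  have hG2 : ∀ s x, 1 < nrm2 x → G (s, x) = 0 := by
    intro s x hx
    simp [hG, hF, hω1 _ hx.le]
  obtain ⟨C, hC, h⟩ := exists_norm_sum_Lambda_marginal_le G hGs
    (HasCompactSupport.of_nrm2 G hG1 hG2) hG1 N
  refine ⟨C, hC, fun T X hT hX q hq a hgcd w hmu H hH => ?_⟩
  have hHG : ∀ x, ∫ s, G (s, x) * e2pi (-(s * dot2 (T ^ 3 • w) (perp2 x))) = H x := by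
    intro x
    rw [hH]
    rcases (nrm2_nonneg x).eq_or_lt with hx | hx
    · have : ∀ s, G (s, x) = 0 := fun s => by simp [hG, hF, ← hx, hω0 0 (by norm_num)]
      simp [this, ← hx]
    · have e : ∀ s, G (s, x) * e2pi (-(s * dot2 (T ^ 3 • w) (perp2 x))) =
          (ω (nrm2 x) : ℂ) * ((ω₀ (s * nrm2 x) : ℂ) *
            e2pi (-(s * dot2 (T ^ 3 • w) (perp2 x)))) := by
        intro s
        simp only [hG, hF]
        push_cast
        ring
      simp only [e]
      rw [integral_const_mul, integral_dilate_mul_e2pi ω₀ _ _ hx]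
      push_cast
      ring
  have := h T X hT hX q hq a hgcd w hmu
  simpa only [hHG] using this

lemma tsum_int_eq_sum_range (f : ℤ → ℂ) (J : ℕ) (h1 : ∀ n : ℕ, J ≤ n → f (n + 1) = 0)
    (h2 : ∀ n : ℕ, J ≤ n → f (-(n + 1)) = 0) :
    ∑' j : ℤ, f j = f 0 + ∑ n ∈ Finset.range J, (f (n + 1) + f (-(n + 1))) := by
  have e1 : ∀ n : ℕ, n ∉ Finset.range J → f (n + 1) = 0 := fun n hn => h1 n (by simpa using hn)
  have e2 : ∀ n : ℕ, n ∉ Finset.range J → f (-(n + 1)) = 0 := fun n hn => h2 n (by simpa using hn)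
  rw [tsum_of_add_one_of_neg_add_one (summable_of_ne_finset_zero e1)
    (summable_of_ne_finset_zero e2), tsum_eq_sum e1, tsum_eq_sum e2, Finset.sum_add_distrib]
  ring

lemma hFun_eq_sum_range (ω : ℝ → ℝ) (h0 : ∀ t, t ≤ 1 / 2 → ω t = 0) (h1 : ∀ t, 1 ≤ t → ω t = 0)
    (y z : ℝ) (hy : 0 < y) (hz : |z| ≤ 1 / 2) (J : ℕ) (hJ : 1 ≤ y * (J + 1)) :
    hFun ω y z = ∑ n ∈ Finset.range J, (1 / (y * (n + 1))) *
      (ω (y * (n + 1)) - ω (|z| / (y * (n + 1)))) := by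
  have e := tsum_pnat_eq_tsum_succ (f := fun n : ℕ => (1 / (y * (n : ℝ))) *
    (ω (y * (n : ℝ)) - ω (|z| / (y * (n : ℝ)))))
  rw [hFun, e, tsum_eq_sum (s := Finset.range J)]
  · push_cast
    rfl
  · intro n hn
    have hn' : J ≤ n := by simpa using hn
    have h2 : 1 ≤ y * ((n + 1 : ℕ) : ℝ) := by
      refine hJ.trans ?_
      push_cast
      gcongr
    rw [h1 _ h2, h0 _ ((div_le_self (abs_nonneg z) h2).trans hz)]
    simp

lemma apply_abs_eq_add (ω : ℝ → ℝ) (h0 : ∀ t, t ≤ 1 / 2 → ω t = 0) (z : ℝ) :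
    ω |z| = ω z + ω (-z) := by
  rcases le_total 0 z with hz | hz
  · rw [abs_of_nonneg hz, h0 (-z) (by linarith), add_zero]
  · rw [abs_of_nonpos hz, h0 z (by linarith), zero_add]

lemma contDiff_div_self (ω : ℝ → ℝ) (hω : ContDiff ℝ (⊤ : ℕ∞) ω)
    (h0 : ∀ t, t ≤ 1 / 2 → ω t = 0) : ContDiff ℝ (⊤ : ℕ∞) fun t => ω t / t := by
  rw [contDiff_iff_contDiffAt]
  intro t
  by_cases ht : t = 0
  · subst ht
    refine (contDiffAt_const (c := (0 : ℝ))).congr_of_eventuallyEq ?_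
    filter_upwards [Iio_mem_nhds (by norm_num : (0 : ℝ) < 1 / 2)] with t ht
    rw [h0 t (Set.mem_Iio.1 ht).le, zero_div]
  · exact hω.contDiffAt.div contDiffAt_id ht

/-- Both halves of the unfolded `|u|`-integral after the substitution `u = ±vt/ρ`. -/
lemma integral_mul_apply_abs_div (ω : ℝ → ℝ) (hω : Continuous ω) (hωc : HasCompactSupport ω)
    (h0 : ∀ t, t ≤ 1 / 2 → ω t = 0) (Φ : ℝ → ℂ) (hΦ : Continuous Φ) (ρ t : ℝ)
    (hρ : 0 < ρ) (ht : 0 < t) :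
    (1 / t : ℝ) * ∫ u, Φ u * (ω (|ρ * u| / t) : ℂ) =
      (ρ⁻¹ : ℝ) * ∫ v, (ω v : ℂ) * (Φ (v * t / ρ) + Φ (-(v * t / ρ))) := by
  have hωc' : HasCompactSupport fun v => (ω v : ℂ) := hωc.comp_left Complex.ofReal_zero
  have hωcn : HasCompactSupport fun v => (ω (-v) : ℂ) :=
    hωc'.comp_homeomorph (Homeomorph.neg ℝ)
  have i1 : Integrable fun v => (ω v : ℂ) * Φ (v * t / ρ) :=
    Continuous.integrable_of_hasCompactSupport (by fun_prop) hωc'.mul_right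
  have i2 : Integrable fun v => (ω v : ℂ) * Φ (-(v * t / ρ)) :=
    Continuous.integrable_of_hasCompactSupport (by fun_prop) hωc'.mul_right
  have i3 : Integrable fun v => (ω (-v) : ℂ) * Φ (v * t / ρ) :=
    Continuous.integrable_of_hasCompactSupport (by fun_prop) hωcn.mul_right
  have h1 := Measure.integral_comp_mul_right (fun u => Φ u * (ω (|ρ * u| / t) : ℂ)) (t / ρ)
  have h2 : ∀ v : ℝ, Φ (v * (t / ρ)) * (ω (|ρ * (v * (t / ρ))| / t) : ℂ) =
      (ω v : ℂ) * Φ (v * t / ρ) + (ω (-v) : ℂ) * Φ (v * t / ρ) := by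
    intro v
    have e1 : ρ * (v * (t / ρ)) = v * t := by field_simp
    have e2 : v * t / ρ = v * (t / ρ) := by ring
    rw [e1, abs_mul, abs_of_pos ht, mul_div_cancel_right₀ _ ht.ne', apply_abs_eq_add ω h0, e2]
    push_cast
    ring
  have h3 := integral_neg_eq_self (fun v => (ω v : ℂ) * Φ (-(v * t / ρ))) volume
  simp only [neg_mul, neg_div, neg_neg] at h3
  simp only [h2] at h1
  rw [integral_add i1 i3, h3, abs_of_pos (by positivity : 0 < (t / ρ)⁻¹)] at h1
  simp only [mul_add]
  rw [integral_add i1 i2, h1, Complex.real_smul]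
  push_cast
  have : (t : ℂ) ≠ 0 := by exact_mod_cast ht.ne'
  have : (ρ : ℂ) ≠ 0 := by exact_mod_cast hρ.ne'
  field_simp

/-- Integration against `h(y, ρ·)` nearly evaluates a band-limited profile at the origin. -/
theorem norm_integral_mul_hFun_sub_le (ω : ℝ → ℝ) (hω : ContDiff ℝ (⊤ : ℕ∞) ω)
    (hω_nonneg : ∀ x, 0 ≤ ω x) (hω_supp : Function.support ω ⊆ Set.Ioo (1 / 2 : ℝ) 1)
    (hω_int : ∫ x : ℝ, ω x = 1) (M L : ℝ) (N : ℕ)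
    (hM : ∀ ξ : ℝ, ‖∫ x, ((ω x / x : ℝ) : ℂ) * e2pi (-(x * ξ))‖ ≤ M / (1 + |ξ|) ^ (N + 2))
    (Φ : ℝ → ℂ) (hΦ : Continuous Φ) (hΦ0 : ∀ u, 1 / 2 ≤ |u| → Φ u = 0)
    (hL : ∀ ξ : ℝ, ‖∫ x, Φ x * e2pi (-(x * ξ))‖ ≤ L / (1 + |ξ|) ^ (N + 2))
    (ρ y : ℝ) (hρ : 1 / 2 ≤ ρ) (hρ1 : ρ ≤ 1) (hy : 0 < y) (hy1 : y ≤ 1) :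
    ‖(∫ u, Φ u * (hFun ω y (ρ * u) : ℂ)) - (ρ⁻¹ : ℝ) * Φ 0‖ ≤
      L * (M + 2 ^ (N + 1)) * (4 * ∑' n : ℤ, 1 / (1 + |(n : ℝ)|) ^ 2) * y ^ N / y := by
  have h0 : ∀ t, t ≤ 1 / 2 → ω t = 0 := fun t ht => by
    by_contra h
    exact absurd (hω_supp h).1 (not_lt.2 ht)
  have h1 : ∀ t, 1 ≤ t → ω t = 0 := fun t ht => by
    by_contra h
    exact absurd (hω_supp h).2 (not_lt.2 ht)
  have hρ0 : 0 < ρ := by linarith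
  have hωcont := hω.continuous
  have hωc : HasCompactSupport ω :=
    HasCompactSupport.intro (isCompact_Icc (a := (1 / 2 : ℝ)) (b := 1)) fun t ht => by
      by_contra h
      exact ht (Set.Ioo_subset_Icc_self (hω_supp h))
  have hωc' : HasCompactSupport fun v => (ω v : ℂ) := hωc.comp_left Complex.ofReal_zero
  have hΦc : HasCompactSupport Φ :=
    HasCompactSupport.intro (isCompact_Icc (a := (-(1 / 2) : ℝ)) (b := 1 / 2)) fun t ht => by
      refine hΦ0 t ?_
      by_contra! h
      exact ht ⟨(abs_lt.1 h).1.le, (abs_lt.1 h).2.le⟩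
  set κ : ℝ → ℂ := fun t => ((ω t / t : ℝ) : ℂ) with hκ
  have hκcont : Continuous κ :=
    Complex.continuous_ofReal.comp (contDiff_div_self ω hω h0).continuous
  have hκc : HasCompactSupport κ := by
    refine HasCompactSupport.intro hωc.isCompact fun t ht => ?_
    simp [hκ, image_eq_zero_of_notMem_tsupport ht]
  set S := 4 * ∑' n : ℤ, 1 / (1 + |(n : ℝ)|) ^ 2 with hS
  have hM0 : 0 ≤ M := by simpa using (norm_nonneg _).trans (hM 0)
  have hL0 : 0 ≤ L := by simpa using (norm_nonneg _).trans (hL 0)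
  set J := ⌈1 / y⌉₊ with hJdef
  have hJ : ∀ n : ℕ, J ≤ n → 1 ≤ y * ((n : ℝ) + 1) := by
    intro n hn
    have h2 : 1 / y ≤ n := (Nat.le_ceil _).trans (by exact_mod_cast hn)
    rw [div_le_iff₀ hy] at h2
    nlinarith
  set I := ∫ u, Φ u with hI
  have hIle : ‖I‖ ≤ L := by simpa [e2pi_zero] using hL 0
  set Ψ : ℝ → ℂ := fun v => ∑ n ∈ Finset.range J,
    (Φ (v * (y * (n + 1)) / ρ) + Φ (-(v * (y * (n + 1)) / ρ))) with hΨ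
  have hΨcont : Continuous Ψ := by
    simp only [hΨ]
    fun_prop
  have hexp : ∫ u, Φ u * (hFun ω y (ρ * u) : ℂ) =
      (∑ n ∈ Finset.range J, κ (y * (n + 1))) * I - (ρ⁻¹ : ℝ) * ∫ v, (ω v : ℂ) * Ψ v := by
    have e1 : ∀ u, Φ u * (hFun ω y (ρ * u) : ℂ) = ∑ n ∈ Finset.range J,
        (κ (y * (n + 1)) * Φ u - (1 / (y * (n + 1)) : ℝ) *
          (Φ u * (ω (|ρ * u| / (y * (n + 1))) : ℂ))) := by
      intro u
      by_cases hu : 1 / 2 ≤ |u|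
      · simp [hΦ0 u hu]
      · rw [hFun_eq_sum_range ω h0 h1 y _ hy _ J (hJ J le_rfl)]
        · push_cast
          rw [Finset.mul_sum]
          refine Finset.sum_congr rfl fun n _ => ?_
          simp only [hκ]
          push_cast
          ring
        · rw [abs_mul, abs_of_pos hρ0]
          nlinarith [abs_nonneg u]
    have i1 : Integrable Φ := hΦ.integrable_of_hasCompactSupport hΦc
    have i2 : ∀ t : ℝ, Integrable fun u => Φ u * (ω (|ρ * u| / t) : ℂ) := fun t =>
      Continuous.integrable_of_hasCompactSupport (by fun_prop) hΦc.mul_right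
    have i3 : ∀ n : ℕ, Integrable fun u => κ (y * (n + 1)) * Φ u - (1 / (y * (n + 1)) : ℝ) *
        (Φ u * (ω (|ρ * u| / (y * (n + 1))) : ℂ)) :=
      fun n => (i1.const_mul _).sub ((i2 _).const_mul _)
    simp only [e1]
    rw [integral_finsetSum _ fun n _ => i3 n]
    have e2 : ∀ n : ℕ, ∫ u, (κ (y * (n + 1)) * Φ u - (1 / (y * (n + 1)) : ℝ) *
        (Φ u * (ω (|ρ * u| / (y * (n + 1))) : ℂ))) = κ (y * (n + 1)) * I -
        (ρ⁻¹ : ℝ) * ∫ v, (ω v : ℂ) *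
          (Φ (v * (y * (n + 1)) / ρ) + Φ (-(v * (y * (n + 1)) / ρ))) := by
      intro n
      rw [integral_sub (i1.const_mul _) ((i2 _).const_mul _), integral_const_mul,
        integral_const_mul, integral_mul_apply_abs_div ω hωcont hωc h0 Φ hΦ ρ _ hρ0
          (by positivity)]
    simp only [e2, hΨ, Finset.mul_sum]
    have i4 : ∀ n : ℕ, Integrable fun v => (ω v : ℂ) *
        (Φ (v * (y * (n + 1)) / ρ) + Φ (-(v * (y * (n + 1)) / ρ))) := fun n =>
      Continuous.integrable_of_hasCompactSupport (by fun_prop) hωc'.mul_right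
    rw [Finset.sum_sub_distrib, integral_finsetSum _ fun n _ => i4 n, Finset.mul_sum,
      Finset.sum_mul]
  have hκsum : ∑' j : ℤ, κ (y * j) = ∑ n ∈ Finset.range J, κ (y * (n + 1)) := by
    have k0 : ∀ t, t ≤ 1 / 2 → κ t = 0 := fun t ht => by simp [hκ, h0 t ht]
    have k1 : ∀ t, 1 ≤ t → κ t = 0 := fun t ht => by simp [hκ, h1 t ht]
    have kneg : ∀ n : ℕ, κ (y * ((-((n : ℤ) + 1) : ℤ) : ℝ)) = 0 := by
      intro n
      refine k0 _ ?_
      push_cast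
      have : 0 < y * ((n : ℝ) + 1) := by positivity
      linarith
    rw [tsum_int_eq_sum_range (fun j : ℤ => κ (y * j)) J (fun n hn => ?_) fun n _ => kneg n]
    · rw [k0 (y * ((0 : ℤ) : ℝ)) (by simp), zero_add]
      refine Finset.sum_congr rfl fun n _ => ?_
      rw [kneg n, add_zero]
      push_cast
      rfl
    · refine k1 _ ?_
      push_cast
      exact hJ n hn
  have hΦsum : ∀ v, 1 / 2 ≤ v → ∑' j : ℤ, Φ (v * y / ρ * j) = Φ 0 + Ψ v := by
    intro v hv
    have big : ∀ n : ℕ, J ≤ n → 1 / 2 ≤ v * y / ρ * ((n : ℝ) + 1) := by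
      intro n hn
      have h2 := hJ n hn
      have h3 : v * y / ρ * ((n : ℝ) + 1) = v * (y * (n + 1)) / ρ := by ring
      rw [h3, le_div_iff₀ hρ0]
      nlinarith
    rw [tsum_int_eq_sum_range (fun j : ℤ => Φ (v * y / ρ * j)) J (fun n hn => ?_) fun n hn => ?_]
    · simp only [hΨ]
      push_cast
      rw [mul_zero]
      congr 1
      refine Finset.sum_congr rfl fun n _ => ?_
      congr 2 <;> ring
    · refine hΦ0 _ ?_
      push_cast
      exact (big n hn).trans (le_abs_self _)
    · refine hΦ0 _ ?_
      push_cast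
      rw [mul_neg, abs_neg]
      exact (big n hn).trans (le_abs_self _)
  set D : ℝ → ℂ := fun v => (ρ⁻¹ : ℝ) * ((ω v : ℂ) * (Φ 0 + Ψ v)) - (y⁻¹ : ℝ) * (κ v * I) with hD
  have iω : Integrable fun v => (ω v : ℂ) := Continuous.integrable_of_hasCompactSupport
    (by fun_prop) hωc'
  have iΨ : Integrable fun v => (ω v : ℂ) * Ψ v := Continuous.integrable_of_hasCompactSupport
    (by fun_prop) hωc'.mul_right
  have iκ : Integrable κ := hκcont.integrable_of_hasCompactSupport hκc
  have hDint : ∫ v, D v = (ρ⁻¹ : ℝ) * (Φ 0 + ∫ v, (ω v : ℂ) * Ψ v) -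
      (y⁻¹ : ℝ) * ((∫ v, κ v) * I) := by
    simp only [hD, mul_add]
    have i3 : Integrable fun v => (ω v : ℂ) * Φ 0 := iω.mul_const _
    have i4 : Integrable fun v => ((ρ⁻¹ : ℝ) : ℂ) * ((ω v : ℂ) * Φ 0) +
        ((ρ⁻¹ : ℝ) : ℂ) * ((ω v : ℂ) * Ψ v) := (i3.const_mul _).add (iΨ.const_mul _)
    rw [integral_sub i4 ((iκ.mul_const _).const_mul _),
      integral_add (i3.const_mul _) (iΨ.const_mul _), integral_const_mul, integral_const_mul,
      integral_const_mul, integral_mul_const, integral_mul_const, integral_complex_ofReal, hω_int]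
    simp
  have hsplit : (∫ u, Φ u * (hFun ω y (ρ * u) : ℂ)) - (ρ⁻¹ : ℝ) * Φ 0 =
      (y⁻¹ : ℝ) * ((y * ∑' j : ℤ, κ (y * j) - ∫ v, κ v) * I) - ∫ v, D v := by
    have : (y : ℂ) ≠ 0 := by exact_mod_cast hy.ne'
    rw [hexp, hDint, hκsum]
    push_cast
    field_simp
    ring
  have hDle : ∀ v, ‖D v‖ ≤ 2 * y⁻¹ * (L * (2 * y) ^ N * S) * ω v := by
    intro v
    by_cases hv : ω v = 0
    · simp [hD, hκ, hv]
    · have hv' := hω_supp hv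
      have hv0 : 0 < v := by linarith [hv'.1]
      have hh : 0 < v * y / ρ := by positivity
      have hh2 : v * y / ρ ≤ 2 * y := by
        rw [div_le_iff₀ hρ0]
        nlinarith [hv'.2]
      have h5 := norm_riemann_sum_sub_integral_le Φ hΦ hΦc L N hL (v * y / ρ) hh (by linarith)
      rw [hΦsum v hv'.1.le] at h5
      have e : D v = ((ω v * (v * y)⁻¹ : ℝ) : ℂ) *
          (((v * y / ρ : ℝ) : ℂ) * (Φ 0 + Ψ v) - I) := by
        simp only [hD, hκ]
        push_cast
        have : (y : ℂ) ≠ 0 := by exact_mod_cast hy.ne'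
        have : (v : ℂ) ≠ 0 := by exact_mod_cast hv0.ne'
        have : (ρ : ℂ) ≠ 0 := by exact_mod_cast hρ0.ne'
        field_simp
      have h6 : (v * y)⁻¹ ≤ 2 * y⁻¹ := by
        rw [mul_inv]
        gcongr
        rw [inv_le_comm₀ hv0 two_pos]
        linarith [hv'.1]
      have := hω_nonneg v
      have hS0 : 0 ≤ S := by positivity
      rw [e, norm_mul, Complex.norm_real, Real.norm_eq_abs, abs_of_nonneg (by positivity)]
      calc ω v * (v * y)⁻¹ * ‖((v * y / ρ : ℝ) : ℂ) * (Φ 0 + Ψ v) - I‖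
          ≤ ω v * (2 * y⁻¹) * (L * (2 * y) ^ N * S) := by
            gcongr
            exact h5.trans (by gcongr)
        _ = _ := by ring
  have hDnorm : ‖∫ v, D v‖ ≤ 2 * y⁻¹ * (L * (2 * y) ^ N * S) := by
    refine (norm_integral_le_of_norm_le ((hωcont.integrable_of_hasCompactSupport hωc).const_mul _)
      (Filter.Eventually.of_forall hDle)).trans (le_of_eq ?_)
    rw [integral_const_mul, hω_int, mul_one]
  have hκnorm := norm_riemann_sum_sub_integral_le κ hκcont hκc M N hM y hy (by linarith)
  rw [hsplit]
  have h7 : ‖((y⁻¹ : ℝ) : ℂ) * ((y * ∑' j : ℤ, κ (y * j) - ∫ v, κ v) * I)‖ ≤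
      y⁻¹ * ((M * y ^ N * S) * L) := by
    rw [norm_mul, norm_mul, Complex.norm_real, Real.norm_eq_abs, abs_of_pos (inv_pos.2 hy)]
    gcongr
  refine (norm_sub_le _ _).trans ((add_le_add h7 hDnorm).trans (le_of_eq ?_))
  rw [mul_pow]
  field_simp
  ring

theorem exists_norm_integral_hFun_sub_le (ω : ℝ → ℝ) (hω : ContDiff ℝ (⊤ : ℕ∞) ω)
    (hω_nonneg : ∀ x, 0 ≤ ω x) (hω_supp : Function.support ω ⊆ Set.Ioo (1 / 2 : ℝ) 1)
    (hω_int : ∫ x : ℝ, ω x = 1) (ω₀ : ℝ → ℝ) (hω₀ : ContDiff ℝ (⊤ : ℕ∞) ω₀)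
    (hω₀_even : ∀ x, ω₀ (-x) = ω₀ x)
    (hω₀_supp : Function.support ω₀ ⊆ Set.Ioo (-(1 / 2) : ℝ) (1 / 2)) (N : ℕ) :
    ∃ K : ℝ, 0 ≤ K ∧ ∀ ρ y α β : ℝ, 1 / 2 ≤ ρ → ρ ≤ 1 → 0 < y → y ≤ 1 →
      ‖(∫ x : ℝ × ℝ, ((ω₀ (nrm2 x) * hFun ω y (ρ * x.1) : ℝ) : ℂ) *
          e2pi (-(x.1 * α + x.2 * β))) - (ρ⁻¹ : ℝ) * fourierW0 ω₀ β‖ ≤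
        K * ((1 + |α|) / (1 + |β|)) ^ (N + 2) * y ^ N / y := by
  have h0 : ∀ t, t ≤ 1 / 2 → ω t = 0 := fun t ht => by
    by_contra h
    exact absurd (hω_supp h).1 (not_lt.2 ht)
  have h1 : ∀ t, 1 ≤ t → ω t = 0 := fun t ht => by
    by_contra h
    exact absurd (hω_supp h).2 (not_lt.2 ht)
  have h2 : ∀ t, 1 / 2 ≤ t → ω₀ t = 0 := fun t ht => by
    by_contra h
    exact absurd (hω₀_supp h).2 (not_lt.2 ht)
  set G : ℝ × ℝ → ℂ := fun x => (ω₀ (nrm2 x) : ℂ) with hG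
  have hGs : ContDiff ℝ (⊤ : ℕ∞) G :=
    Complex.ofRealCLM.contDiff.comp (contDiff_comp_nrm2_of_even ω₀ hω₀ hω₀_even)
  have hGc : HasCompactSupport G := by
    refine HasCompactSupport.intro (isCompact_closedBall (0 : ℝ × ℝ) 1) fun x hx => ?_
    have : 1 < ‖x‖ := by simpa using hx
    have h3 : 1 / 2 ≤ nrm2 x := by
      rcases lt_max_iff.1 this with h | h
      · have := abs_fst_le_nrm2 x
        rw [Real.norm_eq_abs] at h
        linarith
      · have := abs_snd_le_nrm2 x
        rw [Real.norm_eq_abs] at h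
        linarith
    simp [hG, h2 _ h3]
  have hκs : ContDiff ℝ (⊤ : ℕ∞) fun t => ((ω t / t : ℝ) : ℂ) :=
    Complex.ofRealCLM.contDiff.comp (contDiff_div_self ω hω h0)
  have hκc : HasCompactSupport fun t => ((ω t / t : ℝ) : ℂ) := by
    refine HasCompactSupport.intro (isCompact_Icc (a := (1 / 2 : ℝ)) (b := 1)) fun t ht => ?_
    have : ω t = 0 := by
      by_contra h
      exact ht (Set.Ioo_subset_Icc_self (hω_supp h))
    simp [this]
  obtain ⟨M, hM0, hM⟩ := exists_fourier_decay_of_real _ hκs hκc (N + 2)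
  obtain ⟨K₀, hK₀, hdec⟩ := exists_fourier_decay_of_plane G hGs hGc (N + 2)
  refine ⟨K₀ * (M + 2 ^ (N + 1)) * (4 * ∑' n : ℤ, 1 / (1 + |(n : ℝ)|) ^ 2), by positivity,
    fun ρ y α β hρ hρ1 hy hy1 => ?_⟩
  have hρ0 : 0 < ρ := by linarith
  set A := (1 + |α|) / (1 + |β|) with hA
  set g : ℝ × ℝ → ℂ := fun x => G x * e2pi (-(x.1 * α + x.2 * β)) with hg
  have hgcont : Continuous g :=
    hGs.continuous.mul (continuous_e2pi.comp (by fun_prop))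
  have hgc : HasCompactSupport g := hGc.mul_right
  have hg0 : ∀ x : ℝ × ℝ, 1 / 2 ≤ |x.1| → g x = 0 := fun x hx => by
    simp [hg, hG, h2 _ (hx.trans (abs_fst_le_nrm2 x))]
  set Φ : ℝ → ℂ := fun u => ∫ s, g (u, s) with hΦ
  have hΦcont : Continuous Φ := continuous_marginal g hgcont hgc
  have hΦ0 : ∀ u, 1 / 2 ≤ |u| → Φ u = 0 := fun u hu => by
    simp only [hΦ]
    rw [integral_eq_zero_of_ae (Filter.Eventually.of_forall fun s => hg0 (u, s) hu)]
  have hΦzero : Φ 0 = fourierW0 ω₀ β := by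
    simp only [hΦ, fourierW0]
    refine integral_congr_ae (Filter.Eventually.of_forall fun s => ?_)
    have hs : ω₀ (nrm2 (0, s)) = ω₀ s := by
      simp only [nrm2]
      rw [zero_pow two_ne_zero, zero_add, Real.sqrt_sq_eq_abs]
      rcases abs_choice s with h | h <;> rw [h]
      exact hω₀_even s
    simp [hg, hG, hs]
  have hL : ∀ ξ : ℝ, ‖∫ x, Φ x * e2pi (-(x * ξ))‖ ≤ K₀ * A ^ (N + 2) / (1 + |ξ|) ^ (N + 2) := by
    intro ξ
    rw [integral_marginal_mul g hgcont hgc (fun u => e2pi (-(u * ξ)))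
      (continuous_e2pi.comp (by fun_prop))]
    have e : ∀ x : ℝ × ℝ, g x * e2pi (-(x.1 * ξ)) =
        G x * e2pi (-(x.1 * (α + ξ) + x.2 * β)) := by
      intro x
      simp only [hg]
      rw [mul_assoc, ← e2pi_add]
      congr 2
      ring
    simp only [e]
    refine (hdec (α + ξ) β).trans ?_
    have hp : 1 + |ξ| ≤ (1 + |α|) * (1 + |α + ξ|) := by
      have : |ξ| ≤ |α| + |α + ξ| := by
        have := abs_sub (α + ξ) α
        rw [add_sub_cancel_left] at this
        linarith
      nlinarith [abs_nonneg α, abs_nonneg (α + ξ)]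
    have hp' := pow_le_pow_left₀ (by positivity) hp (N + 2)
    rw [mul_pow] at hp'
    rw [hA, div_pow, div_le_div_iff₀ (by positivity) (by positivity)]
    calc K₀ * (1 + |ξ|) ^ (N + 2)
        ≤ K₀ * ((1 + |α|) ^ (N + 2) * (1 + |α + ξ|) ^ (N + 2)) := by gcongr
      _ = _ := by field_simp
  have hmain := norm_integral_mul_hFun_sub_le ω hω hω_nonneg hω_supp hω_int M _ N hM Φ hΦcont hΦ0
    hL ρ y hρ hρ1 hy hy1
  set J := ⌈1 / y⌉₊ with hJdef
  have hJ : 1 ≤ y * ((J : ℝ) + 1) := by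
    have h3 : 1 / y ≤ J := Nat.le_ceil _
    rw [div_le_iff₀ hy] at h3
    nlinarith
  set k : ℝ → ℂ := fun u => ((∑ n ∈ Finset.range J, (1 / (y * (n + 1))) *
      (ω (y * (n + 1)) - ω (|ρ * u| / (y * (n + 1)))) : ℝ) : ℂ) with hk
  have hωcont := hω.continuous
  have hkcont : Continuous k := by
    simp only [hk]
    fun_prop
  have hkeq : ∀ u, |u| < 1 / 2 → (hFun ω y (ρ * u) : ℂ) = k u := by
    intro u hu
    rw [hFun_eq_sum_range ω h0 h1 y _ hy _ J hJ]
    rw [abs_mul, abs_of_pos hρ0]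
    nlinarith [abs_nonneg u]
  have hint : ∫ x : ℝ × ℝ, ((ω₀ (nrm2 x) * hFun ω y (ρ * x.1) : ℝ) : ℂ) *
      e2pi (-(x.1 * α + x.2 * β)) = ∫ u, Φ u * (hFun ω y (ρ * u) : ℂ) := by
    have e1 : ∀ x : ℝ × ℝ, ((ω₀ (nrm2 x) * hFun ω y (ρ * x.1) : ℝ) : ℂ) *
        e2pi (-(x.1 * α + x.2 * β)) = g x * k x.1 := by
      intro x
      rcases le_or_gt (1 / 2) |x.1| with h | h
      · rw [hg0 x h, h2 _ (h.trans (abs_fst_le_nrm2 x))]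
        simp
      · rw [← hkeq _ h]
        simp only [hg, hG]
        push_cast
        ring
    have e2 : ∀ u, Φ u * (hFun ω y (ρ * u) : ℂ) = Φ u * k u := by
      intro u
      rcases le_or_gt (1 / 2) |u| with h | h
      · rw [hΦ0 u h, zero_mul, zero_mul]
      · rw [hkeq u h]
    simp only [e1, e2]
    exact (integral_marginal_mul g hgcont hgc k hkcont).symm
  rw [hint, ← hΦzero]
  refine hmain.trans (le_of_eq ?_)
  ring

/-- Change of variables under a reflection composed with a dilation. -/
lemma integral_reflect_dilate (F : ℝ × ℝ → ℂ) (R m n : ℝ) (hR : 0 < R) (h : m ^ 2 + n ^ 2 = 1) :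
    ∫ x : ℝ × ℝ, F x =
      (R ^ 2 : ℝ) * ∫ x : ℝ × ℝ, F (R * (x.1 * m + x.2 * n), R * (x.1 * n - x.2 * m)) := by
  set f : (ℝ × ℝ) →ₗ[ℝ] (ℝ × ℝ) := Matrix.toLin (Module.Basis.finTwoProd ℝ)
    (Module.Basis.finTwoProd ℝ) !![R * m, R * n; R * n, -(R * m)] with hf
  have hfx : ∀ x, f x = (R * (x.1 * m + x.2 * n), R * (x.1 * n - x.2 * m)) := by
    intro x
    rw [hf, Matrix.toLin_finTwoProd_apply]
    ext <;> simp <;> ring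
  have hdet : LinearMap.det f = -(R ^ 2) := by
    rw [hf, LinearMap.det_toLin, Matrix.det_fin_two_of]
    linear_combination (-(R ^ 2)) * h
  have hdet0 : LinearMap.det f ≠ 0 := by
    rw [hdet]
    exact neg_ne_zero.2 (by positivity)
  have hemb : MeasurableEmbedding f :=
    (LinearMap.equivOfDetNeZero f hdet0).toContinuousLinearEquiv.toHomeomorph.measurableEmbedding
  have := hemb.integral_map (μ := volume) F
  rw [Measure.map_linearMap_addHaar_eq_smul_addHaar volume hdet0, integral_smul_measure,
    hdet] at this
  simp only [hfx] at this
  rw [← this, inv_neg, abs_neg, abs_of_pos (by positivity),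
    ENNReal.toReal_ofReal (by positivity), Complex.real_smul]
  push_cast
  have : (R : ℂ) ≠ 0 := by exact_mod_cast hR.ne'
  field_simp

lemma p2_eq_mul_integral (ω ω₀ : ℝ → ℝ) (T : ℝ) (hT : 0 < T) (r : ℤ × ℤ) (hr : r ≠ 0) (k : ℕ)
    (q : ℝ) (w : ℝ × ℝ) :
    p2 ω ω₀ (T ^ 2) r k q w = (cConst ω : ℂ) * ∫ x : ℝ × ℝ,
      ((ω₀ (nrm2 x) * hFun ω (k * q / T ^ 2) (nrm2 ((r.1 : ℝ), (r.2 : ℝ)) / T * x.1) : ℝ) : ℂ) *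
        e2pi (-(x.1 * (T ^ 3 * dot2 w ((r.1 : ℝ), (r.2 : ℝ)) / nrm2 ((r.1 : ℝ), (r.2 : ℝ))) +
          x.2 * (T ^ 3 * dot2 w (perp2 ((r.1 : ℝ), (r.2 : ℝ))) /
            nrm2 ((r.1 : ℝ), (r.2 : ℝ))))) := by
  have hr' : (((r.1 : ℝ), (r.2 : ℝ)) : ℝ × ℝ) ≠ 0 := by
    intro h
    apply hr
    simpa [Prod.ext_iff] using h
  set n := nrm2 ((r.1 : ℝ), (r.2 : ℝ)) with hn
  have hn0 : 0 < n := nrm2_pos hr'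
  have hsq : n ^ 2 = (r.1 : ℝ) ^ 2 + (r.2 : ℝ) ^ 2 := nrm2_sq _
  have hQ : (T ^ 2) ^ ((3 : ℝ) / 2) = T ^ 3 := by
    rw [← Real.rpow_natCast T 2, ← Real.rpow_mul hT.le]
    norm_num
  have h1 : ((r.1 : ℝ) / n) ^ 2 + ((r.2 : ℝ) / n) ^ 2 = 1 := by
    field_simp
    exact hsq.symm
  rw [p2, integral_reflect_dilate _ (T ^ 3) _ _ (by positivity) h1, ← mul_assoc]
  have hT' : (T : ℂ) ≠ 0 := by exact_mod_cast hT.ne'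
  congr 1
  · push_cast
    field_simp
  · refine integral_congr_ae (Filter.Eventually.of_forall fun x => ?_)
    have e1 : nrm2 (T ^ 3 * (x.1 * (r.1 / n) + x.2 * (r.2 / n)),
        T ^ 3 * (x.1 * (r.2 / n) - x.2 * (r.1 / n))) = T ^ 3 * nrm2 x := by
      rw [nrm2, nrm2, ← Real.sqrt_sq (show 0 ≤ T ^ 3 by positivity),
        ← Real.sqrt_mul (by positivity)]
      congr 1
      simp only
      rw [Real.sqrt_sq (by positivity)]
      linear_combination (T ^ 3) ^ 2 * (x.1 ^ 2 + x.2 ^ 2) * h1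
    simp only [e1]
    have e2 : T ^ 3 * nrm2 x / (T ^ 2) ^ ((3 : ℝ) / 2) = nrm2 x := by
      rw [hQ]
      field_simp
    have e3 : ((r.1 : ℝ) * (T ^ 3 * (x.1 * (r.1 / n) + x.2 * (r.2 / n))) +
        r.2 * (T ^ 3 * (x.1 * (r.2 / n) - x.2 * (r.1 / n)))) / (T ^ 2) ^ 2 = n / T * x.1 := by
      field_simp
      linear_combination (-x.1) * hsq
    rw [e2, e3]
    congr 2
    simp only [dot2, perp2]
    field_simp
    ring

lemma exists_kOf_smul_mem_Lambda (a : ℤ × ℤ) (q : ℕ)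
    (hgcd : Nat.gcd (Int.gcd a.1 a.2) q = 1) (r : ℤ × ℤ) (hr : r ∈ Lambda a q) (hr0 : r ≠ 0) :
    1 ≤ kOf r q ∧ ∃ v ∈ Lambda a q, v ≠ 0 ∧ r = ((kOf r q : ℤ) * v.1, (kOf r q : ℤ) * v.2) := by
  set g := Int.gcd r.1 r.2 with hg
  have hg0 : 0 < g := by
    refine Nat.pos_of_ne_zero fun h => hr0 ?_
    rw [hg, Int.gcd_eq_zero_iff] at h
    exact Prod.ext h.1 h.2
  obtain ⟨s, hs⟩ : (g : ℤ) ∣ r.1 := Int.gcd_dvd_left _ _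
  obtain ⟨t, ht⟩ : (g : ℤ) ∣ r.2 := Int.gcd_dvd_right _ _
  have hd0 : 0 < Nat.gcd g q := Nat.gcd_pos_of_pos_left _ hg0
  have hk : kOf r q * Nat.gcd g q = g := Nat.div_mul_cancel (Nat.gcd_dvd_left g q)
  have hk' : (kOf r q : ℤ) * (Nat.gcd g q : ℤ) = g := by exact_mod_cast hk
  have hrv : r = ((kOf r q : ℤ) * ((Nat.gcd g q : ℤ) * s),
      (kOf r q : ℤ) * ((Nat.gcd g q : ℤ) * t)) := by
    refine Prod.ext ?_ ?_
    · rw [hs, ← hk', mul_assoc]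
    · rw [ht, ← hk', mul_assoc]
  refine ⟨Nat.div_pos (Nat.gcd_le_left _ hg0) hd0,
    ((Nat.gcd g q : ℤ) * s, (Nat.gcd g q : ℤ) * t), ?_, fun h => hr0 ?_, hrv⟩
  · rw [mem_Lambda_iff a q hgcd] at hr ⊢
    have h1 : (q : ℤ) ∣ g * (s * a.2 - t * a.1) := by
      rw [hs, ht] at hr
      convert hr using 1
      ring
    have h2 : (q : ℤ) ∣ q * (s * a.2 - t * a.1) := dvd_mul_right _ _
    have h3 : (q : ℤ) ∣ (Nat.gcd g q : ℤ) * (s * a.2 - t * a.1) := by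
      rw [Nat.gcd_eq_gcd_ab, add_mul, mul_right_comm, mul_right_comm (q : ℤ)]
      exact dvd_add (h1.mul_right _) (h2.mul_right _)
    convert h3 using 1
    ring
  · rw [hrv, (Prod.mk.inj h).1, (Prod.mk.inj h).2, mul_zero]
    rfl

lemma mul_kOf_mul_le (T X : ℝ) (hT : 0 < T) (q : ℕ) (a : ℤ × ℤ)
    (hgcd : Nat.gcd (Int.gcd a.1 a.2) q = 1) (w : ℝ × ℝ)
    (hmu : X * (q * (T ^ 2)⁻¹ + nrm2 w * q * T) ≤ muM (T ^ 2) w a q)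
    (r : ℤ × ℤ) (hr : r ∈ Lambda a q) (hr0 : r ≠ 0) (hrT : nrm2 ((r.1 : ℝ), (r.2 : ℝ)) ≤ T) :
    X * (kOf r q * q / T ^ 2) * (1 + T ^ 3 * nrm2 w) ≤
      1 + |T ^ 3 * dot2 w (perp2 ((r.1 : ℝ), (r.2 : ℝ))) / nrm2 ((r.1 : ℝ), (r.2 : ℝ))| := by
  obtain ⟨hk1, v, hv, hv0, hrv⟩ := exists_kOf_smul_mem_Lambda a q hgcd r hr hr0
  set k := kOf r q with hk
  have hk0 : (0 : ℝ) < k := by exact_mod_cast hk1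
  have hr' : (((r.1 : ℝ), (r.2 : ℝ)) : ℝ × ℝ) ≠ 0 := by
    intro h
    apply hr0
    simpa [Prod.ext_iff] using h
  have hn0 : 0 < nrm2 ((r.1 : ℝ), (r.2 : ℝ)) := nrm2_pos hr'
  have h1 := hmu.trans (muM_le (T ^ 2) w a q v hv hv0)
  have h2 : Mnorm (T ^ 2) w ((r.1 : ℝ), (r.2 : ℝ)) =
      k * Mnorm (T ^ 2) w ((v.1 : ℝ), (v.2 : ℝ)) := by
    rw [Mnorm, Mnorm, ← Real.sqrt_sq hk0.le, ← Real.sqrt_mul (by positivity), hrv]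
    congr 1
    push_cast
    ring
  have h3 := Mnorm_le T hT w ((r.1 : ℝ), (r.2 : ℝ))
  have h4 : X * (k * q / T ^ 2) * (1 + T ^ 3 * nrm2 w) =
      k * (X * (q * (T ^ 2)⁻¹ + nrm2 w * q * T)) := by
    field_simp
  rw [h4]
  refine (mul_le_mul_of_nonneg_left h1 hk0.le).trans ?_
  rw [← h2]
  refine h3.trans (add_le_add ((div_le_one hT).2 hrT) ?_)
  rw [abs_div, abs_mul, abs_of_pos (pow_pos hT 3), abs_of_pos hn0, le_div_iff₀ hn0]
  have := abs_nonneg (dot2 w (perp2 ((r.1 : ℝ), (r.2 : ℝ))))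
  calc _ ≤ T ^ 2 * |dot2 w (perp2 ((r.1 : ℝ), (r.2 : ℝ)))| * T := by gcongr
    _ = _ := by ring

lemma kOf_mul_div_sq_bounds (T X : ℝ) (hT : 1 ≤ T) (hX : 1 ≤ X) (q : ℕ) (hq : 1 ≤ q) (a : ℤ × ℤ)
    (hgcd : Nat.gcd (Int.gcd a.1 a.2) q = 1) (w : ℝ × ℝ)
    (hmu : X * (q * (T ^ 2)⁻¹ + nrm2 w * q * T) ≤ muM (T ^ 2) w a q)
    (r : ℤ × ℤ) (hr : r ∈ Lambda a q) (hr0 : r ≠ 0) (hrT : nrm2 ((r.1 : ℝ), (r.2 : ℝ)) ≤ T)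
    (y α β : ℝ) (hy : y = kOf r q * q / T ^ 2)
    (hα : α = T ^ 3 * dot2 w ((r.1 : ℝ), (r.2 : ℝ)) / nrm2 ((r.1 : ℝ), (r.2 : ℝ)))
    (hβ : β = T ^ 3 * dot2 w (perp2 ((r.1 : ℝ), (r.2 : ℝ))) / nrm2 ((r.1 : ℝ), (r.2 : ℝ))) :
    0 < y ∧ y ≤ 1 ∧ y⁻¹ ≤ T ^ 2 ∧ y * ((1 + |α|) / (1 + |β|)) ≤ X⁻¹ := by
  have hT0 : 0 < T := by linarith
  have hX0 : 0 < X := by linarith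
  have hk1 : (1 : ℝ) ≤ kOf r q := by
    exact_mod_cast (exists_kOf_smul_mem_Lambda a q hgcd r hr hr0).1
  have hq1 : (1 : ℝ) ≤ q := by exact_mod_cast hq
  have hkq : 1 ≤ (kOf r q : ℝ) * q := one_le_mul_of_one_le_of_one_le hk1 hq1
  have hr' : (((r.1 : ℝ), (r.2 : ℝ)) : ℝ × ℝ) ≠ 0 := by
    intro h
    apply hr0
    simpa [Prod.ext_iff] using h
  have hn0 : 0 < nrm2 ((r.1 : ℝ), (r.2 : ℝ)) := nrm2_pos hr'
  have hbd : ∀ z : ℝ × ℝ, nrm2 z = nrm2 ((r.1 : ℝ), (r.2 : ℝ)) →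
      |T ^ 3 * dot2 w z / nrm2 ((r.1 : ℝ), (r.2 : ℝ))| ≤ T ^ 3 * nrm2 w := by
    intro z hz
    rw [abs_div, abs_mul, abs_of_pos (pow_pos hT0 3), abs_of_pos hn0, div_le_iff₀ hn0, mul_assoc]
    have := abs_dot2_le w z
    rw [hz] at this
    gcongr
  have hp : nrm2 (perp2 ((r.1 : ℝ), (r.2 : ℝ))) = nrm2 ((r.1 : ℝ), (r.2 : ℝ)) := by
    simp only [nrm2, perp2]
    congr 1
    ring
  have hαle := hα ▸ hbd _ rfl
  have hβle := hβ ▸ hbd _ hp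
  have hmain := mul_kOf_mul_le T X hT0 q a hgcd w hmu r hr hr0 hrT
  rw [← hβ, ← hy] at hmain
  have hy0 : 0 < y := by
    rw [hy]
    positivity
  have hw : 0 ≤ T ^ 3 * nrm2 w := mul_nonneg (by positivity) (nrm2_nonneg w)
  have hXy : X * y ≤ 1 := by
    by_contra! h
    nlinarith
  refine ⟨hy0, by nlinarith, ?_, ?_⟩
  · rw [inv_le_comm₀ hy0 (by positivity), hy, inv_eq_one_div]
    gcongr
  · rw [← mul_div_assoc, div_le_iff₀ (by positivity), inv_mul_eq_div, le_div_iff₀ hX0]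
    calc y * (1 + |α|) * X = X * y * (1 + |α|) := by ring
      _ ≤ X * y * (1 + T ^ 3 * nrm2 w) := by gcongr
      _ ≤ _ := hmain

theorem exists_norm_p2_sub_le (ω : ℝ → ℝ) (hω : ContDiff ℝ (⊤ : ℕ∞) ω)
    (hω_nonneg : ∀ x, 0 ≤ ω x) (hω_supp : Function.support ω ⊆ Set.Ioo (1 / 2 : ℝ) 1)
    (hω_int : ∫ x : ℝ, ω x = 1) (ω₀ : ℝ → ℝ) (hω₀ : ContDiff ℝ (⊤ : ℕ∞) ω₀)
    (hω₀_even : ∀ x, ω₀ (-x) = ω₀ x)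
    (hω₀_supp : Function.support ω₀ ⊆ Set.Ioo (-(1 / 2) : ℝ) (1 / 2)) (N : ℕ) :
    ∃ K : ℝ, 0 ≤ K ∧ ∀ T X : ℝ, 1 ≤ T → 1 ≤ X → ∀ q : ℕ, 1 ≤ q → ∀ a : ℤ × ℤ,
      Nat.gcd (Int.gcd a.1 a.2) q = 1 → ∀ w : ℝ × ℝ,
      X * (q * (T ^ 2)⁻¹ + nrm2 w * q * T) ≤ muM (T ^ 2) w a q → ∀ r ∈ Lambda a q, r ≠ 0 →
      T / 2 ≤ nrm2 ((r.1 : ℝ), (r.2 : ℝ)) → nrm2 ((r.1 : ℝ), (r.2 : ℝ)) ≤ T →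
      ‖p2 ω ω₀ (T ^ 2) r (kOf r q) q w - (cConst ω : ℂ) *
          (((nrm2 ((r.1 : ℝ), (r.2 : ℝ)) / T)⁻¹ : ℝ) * fourierW0 ω₀ (T ^ 3 *
            dot2 w (perp2 ((r.1 : ℝ), (r.2 : ℝ))) / nrm2 ((r.1 : ℝ), (r.2 : ℝ))))‖ ≤
        K * T ^ 6 / X ^ N := by
  obtain ⟨K, hK, hKle⟩ := exists_norm_integral_hFun_sub_le ω hω hω_nonneg hω_supp hω_int ω₀ hω₀
    hω₀_even hω₀_supp N
  refine ⟨|cConst ω| * K, by positivity, fun T X hT hX q hq a hgcd w hmu r hr hr0 hr1 hr2 => ?_⟩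
  have hT0 : 0 < T := by linarith
  obtain ⟨hy0, hy1, hyT, hyA⟩ := kOf_mul_div_sq_bounds T X hT hX q hq a hgcd w hmu r hr hr0 hr2
    _ _ _ rfl rfl rfl
  rw [p2_eq_mul_integral ω ω₀ T hT0 r hr0, ← mul_sub, norm_mul, Complex.norm_real,
    Real.norm_eq_abs, mul_assoc |cConst ω|, mul_div_assoc |cConst ω|]
  refine mul_le_mul_of_nonneg_left ?_ (abs_nonneg _)
  refine (hKle _ _ _ _ (by rw [le_div_iff₀ hT0]; linarith) ((div_le_one hT0).2 hr2)
    hy0 hy1).trans ?_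
  set A := (1 + |T ^ 3 * dot2 w ((r.1 : ℝ), (r.2 : ℝ)) / nrm2 ((r.1 : ℝ), (r.2 : ℝ))|) /
    (1 + |T ^ 3 * dot2 w (perp2 ((r.1 : ℝ), (r.2 : ℝ))) / nrm2 ((r.1 : ℝ), (r.2 : ℝ))|)
  set y : ℝ := kOf r q * q / T ^ 2
  have hA0 : 0 ≤ A := by positivity
  have hX0 : 0 < X := by linarith
  have hXinv : X⁻¹ ≤ 1 := inv_le_one_of_one_le₀ hX
  calc K * A ^ (N + 2) * y ^ N / y = K * ((y * A) ^ (N + 2) * (y⁻¹) ^ 3) := by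
        rw [mul_pow, pow_add y N 2]
        field_simp
    _ ≤ K * ((X⁻¹) ^ (N + 2) * (T ^ 2) ^ 3) := by gcongr
    _ ≤ K * ((X⁻¹) ^ N * (T ^ 2) ^ 3) := by
        gcongr K * (?_ * _)
        exact pow_le_pow_of_le_one (by positivity) hXinv (by omega)
    _ = K * T ^ 6 / X ^ N := by
        rw [inv_pow]
        field_simp

lemma norm_sum_sub_sum_le_of_box (f g : ℤ × ℤ → ℂ) (T B : ℝ) (hT : 1 ≤ T)
    (hf : ∀ r : ℤ × ℤ, T < nrm2 ((r.1 : ℝ), (r.2 : ℝ)) → f r = 0)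
    (hg : ∀ r : ℤ × ℤ, T < nrm2 ((r.1 : ℝ), (r.2 : ℝ)) → g r = 0)
    (hB : ∀ r, ‖f r - g r‖ ≤ B) : ‖∑' r, f r - ∑' r, g r‖ ≤ 9 * T ^ 2 * B := by
  have hB0 : 0 ≤ B := (norm_nonneg _).trans (hB 0)
  set m : ℤ := ⌊T⌋ with hm
  have hm0 : 0 ≤ m := Int.floor_nonneg.2 (by linarith)
  have hmT : (m : ℝ) ≤ T := Int.floor_le T
  set S := Finset.Icc (-m) m ×ˢ Finset.Icc (-m) m with hS
  have hout : ∀ r ∉ S, T < nrm2 ((r.1 : ℝ), (r.2 : ℝ)) := by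
    intro r hr
    by_contra! h
    have key : ∀ z : ℤ, |(z : ℝ)| ≤ T → z ∈ Finset.Icc (-m) m := by
      intro z hz
      rw [Finset.mem_Icc, ← abs_le, hm, Int.le_floor]
      simpa using hz
    exact hr (Finset.mem_product.2 ⟨key _ ((abs_fst_le_nrm2 _).trans h),
      key _ ((abs_snd_le_nrm2 _).trans h)⟩)
  rw [tsum_eq_sum fun r hr => hf r (hout r hr), tsum_eq_sum fun r hr => hg r (hout r hr),
    ← Finset.sum_sub_distrib]
  refine (norm_sum_le_of_le S fun r _ => hB r).trans ?_
  rw [Finset.sum_const, nsmul_eq_mul]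
  gcongr
  have hc : (S.card : ℤ) = (2 * m + 1) ^ 2 := by
    rw [hS, Finset.card_product, Int.card_Icc]
    push_cast
    rw [Int.toNat_of_nonneg (by linarith)]
    ring
  have hc' : (S.card : ℝ) = (2 * m + 1) ^ 2 := by exact_mod_cast hc
  have hm0' : (0 : ℝ) ≤ m := by exact_mod_cast hm0
  rw [hc']
  calc (2 * (m : ℝ) + 1) ^ 2 ≤ (3 * T) ^ 2 := by
        gcongr
        linarith
    _ = 9 * T ^ 2 := by ring

theorem exists_norm_sum_p2_sub_le (ω : ℝ → ℝ) (hω : ContDiff ℝ (⊤ : ℕ∞) ω)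
    (hω_nonneg : ∀ x, 0 ≤ ω x) (hω_supp : Function.support ω ⊆ Set.Ioo (1 / 2 : ℝ) 1)
    (hω_int : ∫ x : ℝ, ω x = 1) (ω₀ : ℝ → ℝ) (hω₀ : ContDiff ℝ (⊤ : ℕ∞) ω₀)
    (hω₀_even : ∀ x, ω₀ (-x) = ω₀ x)
    (hω₀_supp : Function.support ω₀ ⊆ Set.Ioo (-(1 / 2) : ℝ) (1 / 2)) (N : ℕ) :
    ∃ C : ℝ, 0 ≤ C ∧ ∀ T X : ℝ, 1 ≤ T → 1 ≤ X → ∀ q : ℕ, 1 ≤ q → ∀ a : ℤ × ℤ,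
      Nat.gcd (Int.gcd a.1 a.2) q = 1 → ∀ w : ℝ × ℝ,
      X * (q * (T ^ 2)⁻¹ + nrm2 w * q * T) ≤ muM (T ^ 2) w a q → ∀ H : ℝ × ℝ → ℂ,
      (∀ x, H x = ((nrm2 x)⁻¹ * ω (nrm2 x) : ℝ) *
        fourierW0 ω₀ (dot2 (T ^ 3 • w) (perp2 x) / nrm2 x)) →
      ‖∑' r : ℤ × ℤ, {r : ℤ × ℤ | r ∈ Lambda a q ∧ r ≠ 0}.indicator
          (fun r => ((ω (nrm2 ((r.1 : ℝ), (r.2 : ℝ)) / T) : ℝ) : ℂ) *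
            p2 ω ω₀ (T ^ 2) r (kOf r q) q w) r -
        (cConst ω : ℂ) * ∑' r : ℤ × ℤ,
          (Lambda a q).indicator (fun r => H (T⁻¹ * r.1, T⁻¹ * r.2)) r‖ ≤ C * T ^ 8 / X ^ N := by
  obtain ⟨K, hK, hKle⟩ := exists_norm_p2_sub_le ω hω hω_nonneg hω_supp hω_int ω₀ hω₀ hω₀_even
    hω₀_supp N
  have h0 : ∀ t, t ≤ 1 / 2 → ω t = 0 := fun t ht => by
    by_contra h
    exact absurd (hω_supp h).1 (not_lt.2 ht)
  have h1 : ∀ t, 1 ≤ t → ω t = 0 := fun t ht => by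
    by_contra h
    exact absurd (hω_supp h).2 (not_lt.2 ht)
  have hωc : HasCompactSupport ω :=
    HasCompactSupport.intro (isCompact_Icc (a := (1 / 2 : ℝ)) (b := 1)) fun t ht => by
      by_contra h
      exact ht (Set.Ioo_subset_Icc_self (hω_supp h))
  obtain ⟨W, hW⟩ := hωc.exists_bound_of_continuous hω.continuous
  have hW0 : 0 ≤ W := (norm_nonneg _).trans (hW 0)
  refine ⟨9 * (W * K), by positivity, fun T X hT hX q hq a hgcd w hmu H hH => ?_⟩
  have hT0 : 0 < T := by linarith
  have hX0 : 0 < X := by linarith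
  have hHr : ∀ r : ℤ × ℤ, H (T⁻¹ * r.1, T⁻¹ * r.2) =
      (ω (nrm2 ((r.1 : ℝ), (r.2 : ℝ)) / T) : ℂ) *
        (((nrm2 ((r.1 : ℝ), (r.2 : ℝ)) / T)⁻¹ : ℝ) * fourierW0 ω₀ (T ^ 3 *
          dot2 w (perp2 ((r.1 : ℝ), (r.2 : ℝ))) / nrm2 ((r.1 : ℝ), (r.2 : ℝ)))) := by
    intro r
    have e1 : nrm2 (T⁻¹ * (r.1 : ℝ), T⁻¹ * (r.2 : ℝ)) = nrm2 ((r.1 : ℝ), (r.2 : ℝ)) / T := by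
      have := nrm2_smul T⁻¹ ((r.1 : ℝ), (r.2 : ℝ))
      rw [abs_of_pos (inv_pos.2 hT0), inv_mul_eq_div] at this
      exact this
    have e2 : dot2 (T ^ 3 • w) (perp2 (T⁻¹ * (r.1 : ℝ), T⁻¹ * (r.2 : ℝ))) /
        (nrm2 ((r.1 : ℝ), (r.2 : ℝ)) / T) = T ^ 3 *
          dot2 w (perp2 ((r.1 : ℝ), (r.2 : ℝ))) / nrm2 ((r.1 : ℝ), (r.2 : ℝ)) := by
      have : dot2 (T ^ 3 • w) (perp2 (T⁻¹ * (r.1 : ℝ), T⁻¹ * (r.2 : ℝ))) =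
          T ^ 3 * dot2 w (perp2 ((r.1 : ℝ), (r.2 : ℝ))) / T := by
        simp only [dot2, perp2, Prod.smul_fst, Prod.smul_snd, smul_eq_mul]
        ring
      rw [this, div_div_div_cancel_right₀ hT0.ne']
    rw [hH, e1, e2]
    push_cast
    ring
  have hbig : ∀ r : ℤ × ℤ, T < nrm2 ((r.1 : ℝ), (r.2 : ℝ)) →
      ω (nrm2 ((r.1 : ℝ), (r.2 : ℝ)) / T) = 0 := fun r hr => by
    refine h1 _ ?_
    rw [le_div_iff₀ hT0]
    linarith
  rw [← tsum_mul_left]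
  refine (norm_sum_sub_sum_le_of_box _ _ T (W * (K * T ^ 6 / X ^ N)) hT (fun r hr => ?_)
    (fun r hr => ?_) fun r => ?_).trans (le_of_eq ?_)
  · rw [Set.indicator_apply_eq_zero]
    intro _
    simp [hbig r hr]
  · refine mul_eq_zero_of_right _ (Set.indicator_apply_eq_zero.2 fun _ => ?_)
    rw [hHr, hbig r hr]
    simp
  · by_cases hr : r ∈ Lambda a q
    swap
    · rw [Set.indicator_of_notMem (fun h => hr h.1), Set.indicator_of_notMem hr, mul_zero,
        sub_zero, norm_zero]
      positivity
    rw [Set.indicator_of_mem hr, hHr]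
    by_cases hz : ω (nrm2 ((r.1 : ℝ), (r.2 : ℝ)) / T) = 0
    · rw [Set.indicator_apply_eq_zero.2 fun _ => by simp [hz], hz]
      simp only [Complex.ofReal_zero, zero_mul, mul_zero, sub_zero, norm_zero]
      positivity
    have hmem := hω_supp hz
    have hr1 : T / 2 ≤ nrm2 ((r.1 : ℝ), (r.2 : ℝ)) := by
      have := (lt_div_iff₀ hT0).1 hmem.1
      linarith
    have hr2 : nrm2 ((r.1 : ℝ), (r.2 : ℝ)) ≤ T := ((div_lt_one hT0).1 hmem.2).le
    have hr0 : r ≠ 0 := by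
      rintro rfl
      rw [show (((0 : ℤ × ℤ).1 : ℝ), ((0 : ℤ × ℤ).2 : ℝ)) = (0 : ℝ × ℝ) by simp, nrm2_zero] at hr1
      linarith
    rw [Set.indicator_of_mem (show r ∈ {r : ℤ × ℤ | r ∈ Lambda a q ∧ r ≠ 0} from ⟨hr, hr0⟩),
      mul_left_comm, ← mul_sub, norm_mul, Complex.norm_real]
    exact mul_le_mul (hW _) (hKle T X hT hX q hq a hgcd w hmu r hr hr0 hr1 hr2) (norm_nonneg _) hW0
  · ring

/-- asymptotic for the `r`-sum of `p_{2,r,k(r),q}` (Lemma 4.4). -/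
theorem statement13
    (ω : ℝ → ℝ) (hω_smooth : ContDiff ℝ (⊤ : ℕ∞) ω)
    (hω_nonneg : ∀ x, 0 ≤ ω x)
    (hω_supp : Function.support ω ⊆ Set.Ioo (1/2 : ℝ) 1)
    (hω_int : ∫ x : ℝ, ω x = 1)
    (ω₀ : ℝ → ℝ) (hω₀_smooth : ContDiff ℝ (⊤ : ℕ∞) ω₀)
    (hω₀_nonneg : ∀ x, 0 ≤ ω₀ x)
    (hω₀_even : ∀ x, ω₀ (-x) = ω₀ x)
    (hω₀_supp : Function.support ω₀ ⊆ Set.Ioo (-(1/2) : ℝ) (1/2))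
    (hω₀_one : ω₀ 0 = 1)
    (δ N : ℝ) (hδ : 0 < δ) (hN : 0 < N) :
    ∃ C : ℝ, 0 < C ∧ ∀ Q : ℝ, 1 ≤ Q → ∀ q : ℕ, 1 ≤ q →
      ∀ a : ℤ × ℤ, Nat.gcd (Int.gcd a.1 a.2) q = 1 →
      ∀ w : ℝ × ℝ,
        Q ^ δ * ((q : ℝ) * Q⁻¹ + nrm2 w * q * Q ^ ((1 : ℝ) / 2)) ≤ muM Q w a q →
        ‖(∑' r : ℤ × ℤ,
            Set.indicator {r : ℤ × ℤ | r ∈ Lambda a q ∧ r ≠ 0}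
              (fun r => ((ω (nrm2 ((r.1 : ℝ), (r.2 : ℝ)) / Q ^ ((1 : ℝ) / 2)) : ℝ) : ℂ) *
                p2 ω ω₀ Q r (kOf r q) (q : ℝ) w) r) -
          ((cConst ω * Q ^ ((1 : ℝ) / 2) / q : ℝ) : ℂ) *
            ∫ t : ℝ × ℝ,
              (((nrm2 t)⁻¹ * ω (nrm2 t / Q ^ ((1 : ℝ) / 2)) : ℝ) : ℂ) *
                fourierW0 ω₀ ((Q ^ ((3 : ℝ) / 2) / nrm2 t) * dot2 w (perp2 t))‖
          ≤ C * Q ^ (-N) := by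
  obtain ⟨n, hn⟩ := exists_nat_ge ((N + 4) / δ)
  rw [div_le_iff₀ hδ] at hn
  obtain ⟨C₁, hC₁, h1⟩ := exists_norm_sum_p2_sub_le ω hω_smooth hω_nonneg hω_supp hω_int ω₀
    hω₀_smooth hω₀_even hω₀_supp n
  obtain ⟨C₂, hC₂, h2⟩ := exists_norm_sum_Lambda_main_le ω hω_smooth hω_supp ω₀ hω₀_smooth
    hω₀_supp n
  refine ⟨C₁ + |cConst ω| * C₂ + 1, by positivity, fun Q hQ q hq a hgcd w hmu => ?_⟩
  have hQ0 : 0 < Q := by linarith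
  set T := Q ^ ((1 : ℝ) / 2) with hT
  set X := Q ^ δ with hX
  have hT1 : 1 ≤ T := Real.one_le_rpow hQ (by norm_num)
  have hT0 : 0 < T := by linarith
  have hX1 : 1 ≤ X := Real.one_le_rpow hQ hδ.le
  have hQT : Q = T ^ 2 := by
    rw [hT, ← Real.rpow_natCast, ← Real.rpow_mul hQ0.le]
    norm_num
  have hT3 : Q ^ ((3 : ℝ) / 2) = T ^ 3 := by
    rw [hT, ← Real.rpow_natCast, ← Real.rpow_mul hQ0.le]
    norm_num
  have hTX : T ^ 8 / X ^ n ≤ Q ^ (-N) := by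
    have e : T ^ 8 / X ^ n = Q ^ (4 - δ * n) := by
      rw [show T ^ 8 = Q ^ (4 : ℝ) by rw [hQT]; norm_num [← pow_mul], hX, ← Real.rpow_natCast,
        ← Real.rpow_mul hQ0.le, ← Real.rpow_sub hQ0]
    rw [e]
    exact Real.rpow_le_rpow_of_exponent_le hQ (by linarith)
  set H : ℝ × ℝ → ℂ := fun x => ((nrm2 x)⁻¹ * ω (nrm2 x) : ℝ) *
    fourierW0 ω₀ (dot2 (T ^ 3 • w) (perp2 x) / nrm2 x) with hH
  have hint : ∫ t : ℝ × ℝ, (((nrm2 t)⁻¹ * ω (nrm2 t / T) : ℝ) : ℂ) *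
      fourierW0 ω₀ ((Q ^ ((3 : ℝ) / 2) / nrm2 t) * dot2 w (perp2 t)) = T * ∫ x, H x := by
    have e : ∀ x : ℝ × ℝ, (((nrm2 (T • x))⁻¹ * ω (nrm2 (T • x) / T) : ℝ) : ℂ) *
        fourierW0 ω₀ ((Q ^ ((3 : ℝ) / 2) / nrm2 (T • x)) * dot2 w (perp2 (T • x))) =
        (T⁻¹ : ℝ) * H x := by
      intro x
      have e1 : T ^ 3 / (T * nrm2 x) * dot2 w (perp2 (T • x)) =
          dot2 (T ^ 3 • w) (perp2 x) / nrm2 x := by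
        have : dot2 w (perp2 (T • x)) = T * dot2 w (perp2 x) := by
          simp only [dot2, perp2, Prod.smul_fst, Prod.smul_snd, smul_eq_mul]
          ring
        have h3 : dot2 (T ^ 3 • w) (perp2 x) = T ^ 3 * dot2 w (perp2 x) := by
          simp only [dot2, perp2, Prod.smul_fst, Prod.smul_snd, smul_eq_mul]
          ring
        rw [this, h3]
        field_simp
      rw [hT3, nrm2_smul, abs_of_pos hT0, e1, mul_div_cancel_left₀ _ hT0.ne']
      simp only [hH]
      push_cast
      rw [mul_inv]
      ring
    have := Measure.integral_comp_smul (volume : Measure (ℝ × ℝ)) (fun t : ℝ × ℝ =>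
      (((nrm2 t)⁻¹ * ω (nrm2 t / T) : ℝ) : ℂ) *
        fourierW0 ω₀ ((Q ^ ((3 : ℝ) / 2) / nrm2 t) * dot2 w (perp2 t))) T
    simp only [e] at this
    rw [integral_const_mul, Module.finrank_prod, Module.finrank_self,
      abs_of_pos (by positivity), Complex.real_smul] at this
    have hTc : (T : ℂ) ≠ 0 := by exact_mod_cast hT0.ne'
    generalize (∫ t : ℝ × ℝ, (((nrm2 t)⁻¹ * ω (nrm2 t / T) : ℝ) : ℂ) *
      fourierW0 ω₀ ((Q ^ ((3 : ℝ) / 2) / nrm2 t) * dot2 w (perp2 t))) = I at this ⊢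
    push_cast at this
    field_simp at this
    exact this.symm
  have hmu' : X * (q * (T ^ 2)⁻¹ + nrm2 w * q * T) ≤ muM (T ^ 2) w a q := by rwa [← hQT]
  have b1 := h1 T X hT1 hX1 q hq a hgcd w hmu' H fun _ => rfl
  have b2 := h2 T X hT1 (by linarith) q hq a hgcd w hmu' H fun _ => rfl
  rw [← hQT] at b1 b2
  rw [hint]
  set A := ∑' r : ℤ × ℤ, {r : ℤ × ℤ | r ∈ Lambda a q ∧ r ≠ 0}.indicator
          (fun r => ((ω (nrm2 ((r.1 : ℝ), (r.2 : ℝ)) / T) : ℝ) : ℂ) *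
            p2 ω ω₀ Q r (kOf r q) q w) r
  set B := ∑' r : ℤ × ℤ, (Lambda a q).indicator (fun r => H (T⁻¹ * r.1, T⁻¹ * r.2)) r
  have hsplit : A - ((cConst ω * T / q : ℝ) : ℂ) * (T * ∫ x, H x) =
      (A - (cConst ω : ℂ) * B) + (cConst ω : ℂ) * (B - (Q / q : ℝ) * ∫ x, H x) := by
    rw [hQT]
    push_cast
    ring
  have hQ8 : Q ≤ T ^ 8 := by
    rw [hQT]
    exact pow_le_pow_right₀ hT1 (by norm_num)
  rw [hsplit]
  refine (norm_add_le _ _).trans ?_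
  rw [norm_mul, Complex.norm_real, Real.norm_eq_abs]
  have hXn : 0 < X ^ n := by positivity
  have b3 : C₁ * T ^ 8 / X ^ n ≤ C₁ * Q ^ (-N) := by
    rw [mul_div_assoc]
    gcongr
  have b4 : C₂ * Q / X ^ n ≤ C₂ * Q ^ (-N) := by
    rw [mul_div_assoc]
    gcongr
    exact (by gcongr : Q / X ^ n ≤ T ^ 8 / X ^ n).trans hTX
  have b5 := mul_le_mul_of_nonneg_left (b2.trans b4) (abs_nonneg (cConst ω))
  have b6 : 0 ≤ Q ^ (-N) := by positivity
  linarith [b1.trans b3]
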